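/- Berger-Tung inner bound: Let P_{X₁X₂} be a joint probability mass function on finite alphabets 𝒳₁×𝒳₂ and let the correlated sources (X₁^n, X₂^n) be i.i.d. according to P_{X₁X₂}. Suppose P̄_{U₁|X₁} and P̄_{U₂|X₂} are conditional pmfs into finite alphabets 𝒰₁, 𝒰₂ (so that U₁ − X₁ − X₂ − U₂ is a Markov chain under P̄ = P_{X₁X₂} P̄_{U₁|X₁} P̄_{U₂|X₂}) and φ_k: 𝒰₁×𝒰₂ → 𝒴_k are functions with E_{P̄}[ d_k(X_k, φ_k(U₁,U₂)) ] ≤ D_k for k = 1,2, where d_k: 𝒳_k×𝒴_k → [0,∞) are distortion functions on finite alphabets. If R₁ > I_{P̄}(X₁;U₁|U₂), R₂ > I_{P̄}(X₂;U₂|U₁), and R₁+R₂ > I_{P̄}(X₁,X₂;U₁,U₂), then (R₁,R₂) is achievable under distortion level (D₁,D₂): there exist sequences of (possibly stochastic) encoders f₁ₙ: 𝒳₁^n → ℳ₁ₙ, f₂ₙ: 𝒳₂^n → ℳ₂ₙ with |ℳ_kₙ| = 2^{nR_k}, and decoders g_n: ℳ₁ₙ×ℳ₂ₙ → 𝒴₁^n×𝒴₂^n,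 such that limsup_{n→∞} E[ d_k(X_k^n, Y_k^n) ] ≤ D_k for k = 1,2, where (Y₁^n, Y₂^n) = g_n(f₁ₙ(X₁^n), f₂ₙ(X₂^n)). -/

import Mathlib

open Filter

/-!
The proof is by random coding with *likelihood encoders*, which makes the Markov lemma and strong
typicality unnecessary.

One-shot bound (`one_shot`). Let `q₁, q₂` be the marginals of `U₁, U₂`. Draw two independent
codebooks with i.i.d. codewords of laws `q₁`, `q₂`, indexed by pairs (message, index in the bin).
On observing `x`, encoder `k` selects a codeword index `l` with probability proportional to the
likelihood ratio `r (c l)`, where `r = W_k(·|x) / q_k`, and sends the message part of `l`. Since `r`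
has mean one under `q_k`, its empirical mean over the codebook is close to one as soon as the
codebook is larger than `2 ^ (n I(X_k;U_k))` (`soft_covering`), and the `ℓ¹` distance between the
encoder and the idealised weights `r / |L|` is exactly the deviation of that empirical mean from one
(`exists_likelihood_encoder`). So each encoder may be replaced by idealised weights
(`codebookMean_idealise`), and with these, averaging over the codebooks gives the source pair and
the two selected codewords exactly the joint law `P W₁ W₂`. The decoder looks inside its two bins
for a pair of codewords with `q₁₂ > γ q₁ q₂` (`exists_decoder`). Any wrong pair, whether one or both
of its codewords are wrong, is distributed as `q₁ × q₂` (`packing`), hence passes the test with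
probability at most `1 / γ`, and there are `|J₁| |J₂| - 1` wrong pairs.

Asymptotics (`n_shot`, `exists_codes`). For the memoryless extension, a mean absolute deviation
bound for i.i.d. averages (`iid_abs_dev_le`) controls the information densities (`aep`). The
Markov chain gives `I(X₁;U₁|U₂) = I(X₁;U₁) - I(U₁;U₂)` and its analogues (`condInfo1_eq`,
`condInfo2_eq`, `jointInfo_eq`), so that the rate constraints leave room for bin sizes that satisfy
both the covering and the packing requirement. A bin rate is truncated at zero, and two singleton
bins contain no wrong pair.

The loss is the sum of the positive parts of the excesses of the two average distortions over
`D₁` and `D₂`. It is nonnegative and bounded, so a code for which its mean vanishes is good for both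
distortion constraints at once (`limsup_le_of_excess`).
-/

/-! ### Averages of i.i.d. letters, soft covering and likelihood encoders -/

/-- The i.i.d. law on words `c : ι → α` with single-letter weights `q`. -/
noncomputable def iidLaw {ι α : Type*} [Fintype ι] (q : α → ℝ) (c : ι → α) : ℝ := ∏ i, q (c i)

section Iid
variable {ι α : Type*} [Fintype ι] [DecidableEq ι] [Fintype α] (q : α → ℝ)

omit [DecidableEq ι] [Fintype α] in
lemma iidLaw_nonneg (hq : ∀ a, 0 ≤ q a) (c : ι → α) : 0 ≤ iidLaw q c :=
  Finset.prod_nonneg fun _ _ => hq _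

/-- Expectation of a product of functions of the single letters. -/
lemma sum_iidLaw_mul_prod (h : ι → α → ℝ) :
    ∑ c : ι → α, iidLaw q c * ∏ i, h i (c i) = ∏ i, ∑ a, q a * h i a := by
  classical
  rw [Finset.prod_univ_sum, Fintype.piFinset_univ]
  exact Finset.sum_congr rfl fun c _ => Finset.prod_mul_distrib.symm

lemma sum_iidLaw (hq1 : ∑ a, q a = 1) : ∑ c : ι → α, iidLaw q c = 1 := by
  have := sum_iidLaw_mul_prod (ι := ι) q (fun _ _ => 1)
  simpa [hq1] using this

lemma sum_iidLaw_apply (hq1 : ∑ a, q a = 1) (i : ι) (f : α → ℝ) :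
    ∑ c : ι → α, iidLaw q c * f (c i) = ∑ a, q a * f a := by
  have := sum_iidLaw_mul_prod (ι := ι) q (fun j a => if j = i then f a else 1)
  have h1 : ∀ c : ι → α, (∏ j, if j = i then f (c j) else 1) = f (c i) := fun c => by
    simp
  simp only [h1] at this
  rw [this, Finset.prod_eq_single i] <;> simp +contextual [hq1]

lemma sum_iidLaw_apply₂ (hq1 : ∑ a, q a = 1) {i j : ι} (hij : i ≠ j) (f g : α → ℝ) :
    ∑ c : ι → α, iidLaw q c * (f (c i) * g (c j)) = (∑ a, q a * f a) * ∑ a, q a * g a := by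
  have := sum_iidLaw_mul_prod (ι := ι) q
    (fun k a => (if k = i then f a else 1) * (if k = j then g a else 1))
  have h1 : ∀ c : ι → α, (∏ k, (if k = i then f (c k) else 1) * (if k = j then g (c k) else 1))
      = f (c i) * g (c j) := fun c => by
    rw [Finset.prod_mul_distrib]; simp
  simp only [h1] at this
  rw [this, Finset.prod_eq_mul i j hij]
  · simp [hij, hij.symm]
  · intro k _ hk; simp [hk.1, hk.2, hq1]
  · simp
  · simp

/-- The variance of an empirical mean is at most the second moment over the sample size. -/
lemma iid_variance_le [Nonempty ι] (hq1 : ∑ a, q a = 1) (f : α → ℝ) :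
    ∑ c : ι → α, iidLaw q c *
      ((∑ i, f (c i)) / Fintype.card ι - ∑ a, q a * f a) ^ 2
      ≤ (∑ a, q a * f a ^ 2) / Fintype.card ι := by
  set μ := ∑ a, q a * f a with hμ
  set g : α → ℝ := fun a => f a - μ with hg
  have hN : (0:ℝ) < Fintype.card ι := by exact_mod_cast Fintype.card_pos
  have hg0 : ∑ a, q a * g a = 0 := by
    simp only [hg, mul_sub, Finset.sum_sub_distrib, ← Finset.sum_mul, hq1, ← hμ]; ring
  have hg2 : ∑ a, q a * (g a * g a) = ∑ a, q a * f a ^ 2 - μ ^ 2 := by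
    have : ∀ a, q a * (g a * g a) = q a * f a ^ 2 - 2 * μ * (q a * f a) + μ ^ 2 * q a := by
      intro a; simp only [hg]; ring
    simp only [this, Finset.sum_add_distrib, Finset.sum_sub_distrib, ← Finset.mul_sum, hq1, ← hμ]
    ring
  have hsq : ∀ c : ι → α, ((∑ i, f (c i)) / Fintype.card ι - μ) ^ 2
      = (∑ i, ∑ j, g (c i) * g (c j)) / (Fintype.card ι : ℝ) ^ 2 := by
    intro c
    rw [← Finset.sum_mul_sum]
    have : ∑ i, g (c i) = (∑ i, f (c i)) - Fintype.card ι * μ := by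
      simp [hg, Finset.sum_sub_distrib]
    rw [this]; field_simp
  have hcov : ∀ i j, ∑ c : ι → α, iidLaw q c * (g (c i) * g (c j))
      = if i = j then ∑ a, q a * (g a * g a) else 0 := by
    intro i j
    split_ifs with h
    · subst h; exact sum_iidLaw_apply q hq1 i (fun a => g a * g a)
    · rw [sum_iidLaw_apply₂ q hq1 h, hg0, zero_mul]
  have : ∑ c : ι → α, iidLaw q c * ((∑ i, f (c i)) / Fintype.card ι - μ) ^ 2
      = (∑ a, q a * (g a * g a)) / Fintype.card ι := by
    calc _ = (∑ i, ∑ j, ∑ c : ι → α, iidLaw q c * (g (c i) * g (c j)))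
          / (Fintype.card ι : ℝ) ^ 2 := by
          simp only [hsq, ← mul_div_assoc, ← Finset.sum_div, Finset.mul_sum]
          rw [Finset.sum_comm]
          congr 1
          exact Finset.sum_congr rfl fun i _ => Finset.sum_comm
      _ = _ := by
          simp only [hcov]; simp; field_simp
  rw [this, hg2]
  gcongr
  nlinarith [sq_nonneg μ]

/-- Quantitative weak law of large numbers in mean absolute deviation. -/
lemma iid_abs_dev_le [Nonempty ι] (hq : ∀ a, 0 ≤ q a) (hq1 : ∑ a, q a = 1) (f : α → ℝ) :
    ∑ c : ι → α, iidLaw q c * |(∑ i, f (c i)) / Fintype.card ι - ∑ a, q a * f a|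
      ≤ √((∑ a, q a * f a ^ 2) / Fintype.card ι) := by
  apply Real.le_sqrt_of_sq_le
  refine le_trans ?_ (iid_variance_le q hq1 f)
  refine (Finset.sum_sq_le_sum_mul_sum_of_sq_le_mul Finset.univ
    (f := fun c : ι → α => iidLaw q c)
    (g := fun c => iidLaw q c * ((∑ i, f (c i)) / Fintype.card ι - ∑ a, q a * f a) ^ 2)
    (fun c _ => iidLaw_nonneg q hq c)
    (fun c _ => mul_nonneg (iidLaw_nonneg q hq c) (sq_nonneg _)) ?_).trans ?_
  · intro c _
    rw [mul_pow, sq_abs]; exact le_of_eq (by ring)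
  · rw [sum_iidLaw q hq1, one_mul]

/-- Soft covering: if `r ≥ 0` has mean one, its empirical mean over a random codebook is close
to one as soon as the codebook is large compared with the level `τ` that `r` rarely exceeds. -/
lemma soft_covering [Nonempty ι] (hq : ∀ a, 0 ≤ q a) (hq1 : ∑ a, q a = 1) (r : α → ℝ)
    (hr : ∀ a, 0 ≤ r a) (hr1 : ∑ a, q a * r a = 1) {τ : ℝ} (hτ : 0 ≤ τ) :
    ∑ c : ι → α, iidLaw q c * |1 - (∑ i, r (c i)) / Fintype.card ι|
      ≤ √(τ / Fintype.card ι) + 2 * ∑ a, q a * r a * (if r a > τ then 1 else 0) := by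
  have hN : (0:ℝ) < Fintype.card ι := by exact_mod_cast Fintype.card_pos
  set s : α → ℝ := fun a => if r a > τ then 0 else r a with hs
  set t : α → ℝ := fun a => r a * (if r a > τ then 1 else 0) with ht
  have hst : ∀ a, r a = s a + t a := by intro a; simp only [hs, ht]; split_ifs <;> simp
  have ht0 : ∀ a, 0 ≤ t a := by
    intro a; simp only [ht]; split_ifs <;> simp [hr]
  have hs0 : ∀ a, 0 ≤ s a := by
    intro a; simp only [hs]; split_ifs <;> simp [hr]
  have htt : ∑ a, q a * r a * (if r a > τ then 1 else 0) = ∑ a, q a * t a := by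
    simp only [ht, mul_assoc]
  have hsum : ∑ a, q a * s a + ∑ a, q a * t a = 1 := by
    rw [← hr1, ← Finset.sum_add_distrib]
    exact Finset.sum_congr rfl fun a _ => by rw [hst a]; ring
  have hmom : ∑ a, q a * s a ^ 2 ≤ τ := by
    calc ∑ a, q a * s a ^ 2 ≤ ∑ a, τ * (q a * r a) := by
          apply Finset.sum_le_sum; intro a _
          have : s a ^ 2 ≤ τ * r a := by
            simp only [hs]; split_ifs with h
            · simpa using mul_nonneg hτ (hr a)
            · rw [sq]; exact mul_le_mul_of_nonneg_right (not_lt.mp h) (hr a)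
          nlinarith [mul_le_mul_of_nonneg_left this (hq a)]
      _ = τ := by rw [← Finset.mul_sum, hr1, mul_one]
  have hpt : ∀ c : ι → α, |1 - (∑ i, r (c i)) / Fintype.card ι| ≤
      |(∑ i, s (c i)) / Fintype.card ι - ∑ a, q a * s a| + (∑ i, t (c i)) / Fintype.card ι
        + ∑ a, q a * t a := by
    intro c
    have e : (∑ i, r (c i)) / (Fintype.card ι : ℝ)
        = (∑ i, s (c i)) / Fintype.card ι + (∑ i, t (c i)) / Fintype.card ι := by
      rw [← add_div, ← Finset.sum_add_distrib]
      congr 1; exact Finset.sum_congr rfl fun i _ => hst _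
    have h1 : 0 ≤ (∑ i, t (c i)) / (Fintype.card ι : ℝ) :=
      div_nonneg (Finset.sum_nonneg fun i _ => ht0 _) hN.le
    have h2 : 0 ≤ ∑ a, q a * t a := Finset.sum_nonneg fun a _ => mul_nonneg (hq a) (ht0 a)
    rw [e, abs_le]
    have := neg_abs_le ((∑ i, s (c i)) / (Fintype.card ι : ℝ) - ∑ a, q a * s a)
    have := le_abs_self ((∑ i, s (c i)) / (Fintype.card ι : ℝ) - ∑ a, q a * s a)
    constructor <;> linarith
  have hEt : ∑ c : ι → α, iidLaw q c * ((∑ i, t (c i)) / Fintype.card ι) = ∑ a, q a * t a := by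
    simp only [← mul_div_assoc, ← Finset.sum_div, Finset.mul_sum]
    rw [Finset.sum_comm]
    simp only [sum_iidLaw_apply q hq1 _ t]
    simp
  calc _ ≤ ∑ c : ι → α, (iidLaw q c * |(∑ i, s (c i)) / Fintype.card ι - ∑ a, q a * s a|
          + iidLaw q c * ((∑ i, t (c i)) / Fintype.card ι) + iidLaw q c * ∑ a, q a * t a) := by
        apply Finset.sum_le_sum; intro c _
        have := mul_le_mul_of_nonneg_left (hpt c) (iidLaw_nonneg q hq c)
        linarith
    _ = ∑ c : ι → α, iidLaw q c * |(∑ i, s (c i)) / Fintype.card ι - ∑ a, q a * s a|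
          + 2 * ∑ a, q a * t a := by
        rw [Finset.sum_add_distrib, Finset.sum_add_distrib, hEt, ← Finset.sum_mul,
          sum_iidLaw q hq1]; ring
    _ ≤ _ := by
        rw [htt]
        have h1 := iid_abs_dev_le (ι := ι) q hq hq1 s
        have h2 : √((∑ a, q a * s a ^ 2) / (Fintype.card ι : ℝ)) ≤ √(τ / Fintype.card ι) :=
          Real.sqrt_le_sqrt (by gcongr)
        linarith

end Iid

/-- Normalised weights: the likelihood encoder selects an index with probability proportional
to its weight (uniformly when every weight vanishes). -/
lemma exists_likelihood_encoder {ι : Type*} [Fintype ι] [Nonempty ι] (v : ι → ℝ)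
    (hv : ∀ i, 0 ≤ v i) :
    ∃ e : ι → ℝ, (∀ i, 0 ≤ e i) ∧ ∑ i, e i = 1 ∧
      ∑ i, |e i - v i / Fintype.card ι| = |1 - (∑ i, v i) / Fintype.card ι| := by
  have hN : (0:ℝ) < Fintype.card ι := by exact_mod_cast Fintype.card_pos
  rcases (Finset.sum_nonneg fun i _ => hv i : 0 ≤ ∑ i, v i).eq_or_lt with h | h
  · have hz : ∀ i, v i = 0 := fun i =>
      (Finset.sum_eq_zero_iff_of_nonneg fun i _ => hv i).mp h.symm i (Finset.mem_univ i)
    refine ⟨fun _ => 1 / Fintype.card ι, fun _ => by positivity, ?_, ?_⟩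
    · simp
    · simp [hz]
  · refine ⟨fun i => v i / ∑ j, v j, fun i => div_nonneg (hv i) h.le, ?_, ?_⟩
    · rw [← Finset.sum_div, div_self h.ne']
    · have : ∀ i, |v i / ∑ j, v j - v i / (Fintype.card ι : ℝ)|
          = v i * |1 / ∑ j, v j - 1 / (Fintype.card ι : ℝ)| := by
        intro i
        rw [← abs_of_nonneg (hv i), ← abs_mul, abs_of_nonneg (hv i)]
        congr 1; ring
      simp only [this, ← Finset.sum_mul]
      rw [← abs_of_nonneg h.le, ← abs_mul, abs_of_nonneg h.le]
      congr 1; field_simp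

/-! ### Averages over random codebooks -/

/-- Expectation over two independent random codebooks with i.i.d. codewords. -/
noncomputable def codebookMean {L1 L2 B1 B2 : Type*} [Fintype L1] [Fintype L2] [Fintype B1]
    [Fintype B2] [DecidableEq L1] [DecidableEq L2] (q1 : B1 → ℝ) (q2 : B2 → ℝ)
    (H : (L1 → B1) → (L2 → B2) → ℝ) : ℝ :=
  ∑ c1, ∑ c2, iidLaw q1 c1 * iidLaw q2 c2 * H c1 c2

section Codebook
variable {L1 L2 B1 B2 : Type*} [Fintype L1] [Fintype L2] [Fintype B1]
    [Fintype B2] [DecidableEq L1] [DecidableEq L2] (q1 : B1 → ℝ) (q2 : B2 → ℝ)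

lemma codebookMean_mono (hq1 : ∀ u, 0 ≤ q1 u) (hq2 : ∀ u, 0 ≤ q2 u)
    {H H' : (L1 → B1) → (L2 → B2) → ℝ} (h : ∀ c1 c2, H c1 c2 ≤ H' c1 c2) :
    codebookMean q1 q2 H ≤ codebookMean q1 q2 H' :=
  Finset.sum_le_sum fun _ _ => Finset.sum_le_sum fun _ _ =>
    mul_le_mul_of_nonneg_left (h _ _) (mul_nonneg (iidLaw_nonneg _ hq1 _) (iidLaw_nonneg _ hq2 _))

lemma codebookMean_add (H H' : (L1 → B1) → (L2 → B2) → ℝ) :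
    codebookMean q1 q2 (fun c1 c2 => H c1 c2 + H' c1 c2)
      = codebookMean q1 q2 H + codebookMean q1 q2 H' := by
  simp only [codebookMean, mul_add, Finset.sum_add_distrib]

lemma codebookMean_const_mul (b : ℝ) (H : (L1 → B1) → (L2 → B2) → ℝ) :
    codebookMean q1 q2 (fun c1 c2 => b * H c1 c2) = b * codebookMean q1 q2 H := by
  simp only [codebookMean, Finset.mul_sum]
  exact Finset.sum_congr rfl fun _ _ => Finset.sum_congr rfl fun _ _ => by ring

lemma codebookMean_sum {κ : Type*} [Fintype κ] (H : κ → (L1 → B1) → (L2 → B2) → ℝ) :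
    codebookMean q1 q2 (fun c1 c2 => ∑ k, H k c1 c2) = ∑ k, codebookMean q1 q2 (H k) := by
  simp only [codebookMean, Finset.mul_sum]
  symm
  rw [Finset.sum_comm]
  exact Finset.sum_congr rfl fun _ _ => Finset.sum_comm

lemma codebookMean_prod (H1 : (L1 → B1) → ℝ) (H2 : (L2 → B2) → ℝ) :
    codebookMean q1 q2 (fun c1 c2 => H1 c1 * H2 c2)
      = (∑ c1, iidLaw q1 c1 * H1 c1) * ∑ c2, iidLaw q2 c2 * H2 c2 := by
  rw [Finset.sum_mul_sum]
  exact Finset.sum_congr rfl fun _ _ => Finset.sum_congr rfl fun _ _ => by ring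

lemma codebookMean_right (hq1 : ∑ u, q1 u = 1) (H2 : (L2 → B2) → ℝ) :
    codebookMean (L1 := L1) q1 q2 (fun _ c2 => H2 c2) = ∑ c2, iidLaw q2 c2 * H2 c2 := by
  have := codebookMean_prod (L1 := L1) q1 q2 (fun _ => 1) H2
  simpa [sum_iidLaw q1 hq1] using this

/-- One codeword from each codebook: the pair has law `q1 × q2`. -/
lemma codebookMean_apply (hq1 : ∑ u, q1 u = 1) (hq2 : ∑ u, q2 u = 1) (l1 : L1) (l2 : L2)
    (F : B1 → B2 → ℝ) :
    codebookMean q1 q2 (fun c1 c2 => F (c1 l1) (c2 l2)) = ∑ u1, ∑ u2, q1 u1 * q2 u2 * F u1 u2 := by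
  unfold codebookMean
  simp only [mul_assoc, ← Finset.mul_sum]
  have e : ∀ c1 : L1 → B1, ∑ c2, iidLaw q2 c2 * F (c1 l1) (c2 l2) = ∑ u2, q2 u2 * F (c1 l1) u2 :=
    fun c1 => sum_iidLaw_apply q2 hq2 l2 (F (c1 l1))
  simp only [e]
  exact sum_iidLaw_apply q1 hq1 l1 (fun u1 => ∑ u2, q2 u2 * F u1 u2)

/-- Weights `r1, r2` at the true codewords, a test `t` at a pair of codewords differing from the
true pair in both coordinates. -/
lemma codebookMean_packing_both (hq1 : ∑ u, q1 u = 1) (hq2 : ∑ u, q2 u = 1)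
    {l1 l1' : L1} {l2 l2' : L2} (h1 : l1 ≠ l1') (h2 : l2 ≠ l2')
    (r1 : B1 → ℝ) (r2 : B2 → ℝ) (hr1 : ∑ u, q1 u * r1 u = 1) (hr2 : ∑ u, q2 u * r2 u = 1)
    (t : B1 → B2 → ℝ) :
    codebookMean q1 q2 (fun c1 c2 => r1 (c1 l1) * r2 (c2 l2) * t (c1 l1') (c2 l2'))
      = ∑ u1, ∑ u2, q1 u1 * q2 u2 * t u1 u2 := by
  have e : ∀ c1, ∑ c2, iidLaw q1 c1 * iidLaw q2 c2 * (r1 (c1 l1) * r2 (c2 l2) * t (c1 l1') (c2 l2'))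
      = iidLaw q1 c1 * (r1 (c1 l1) * ∑ u2, q2 u2 * t (c1 l1') u2) := by
    intro c1
    have := sum_iidLaw_apply₂ q2 hq2 h2 r2 (fun u => t (c1 l1') u)
    rw [hr2, one_mul] at this
    rw [← this, Finset.mul_sum, Finset.mul_sum]
    exact Finset.sum_congr rfl fun _ _ => by ring
  unfold codebookMean
  simp only [e]
  rw [sum_iidLaw_apply₂ q1 hq1 h1 r1 (fun u => ∑ u2, q2 u2 * t u u2), hr1, one_mul]
  simp only [Finset.mul_sum, mul_assoc]

/-- As `codebookMean_packing_both`, when only the second codeword differs. -/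
lemma codebookMean_packing_right (hq1 : ∑ u, q1 u = 1) (hq2 : ∑ u, q2 u = 1)
    (l1 : L1) {l2 l2' : L2} (h2 : l2 ≠ l2')
    (r1 : B1 → ℝ) (r2 : B2 → ℝ) (hr2 : ∑ u, q2 u * r2 u = 1)
    (t : B1 → B2 → ℝ) :
    codebookMean q1 q2 (fun c1 c2 => r1 (c1 l1) * r2 (c2 l2) * t (c1 l1) (c2 l2'))
      = ∑ u1, ∑ u2, q1 u1 * r1 u1 * q2 u2 * t u1 u2 := by
  have e : ∀ c1, ∑ c2, iidLaw q1 c1 * iidLaw q2 c2 * (r1 (c1 l1) * r2 (c2 l2) * t (c1 l1) (c2 l2'))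
      = iidLaw q1 c1 * (r1 (c1 l1) * ∑ u2, q2 u2 * t (c1 l1) u2) := by
    intro c1
    have := sum_iidLaw_apply₂ q2 hq2 h2 r2 (fun u => t (c1 l1) u)
    rw [hr2, one_mul] at this
    rw [← this, Finset.mul_sum, Finset.mul_sum]
    exact Finset.sum_congr rfl fun _ _ => by ring
  unfold codebookMean
  simp only [e]
  rw [sum_iidLaw_apply q1 hq1 l1 (fun u => r1 u * ∑ u2, q2 u2 * t u u2)]
  simp only [Finset.mul_sum, mul_assoc]

/-- As `codebookMean_packing_both`, when only the first codeword differs. -/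
lemma codebookMean_packing_left (hq1 : ∑ u, q1 u = 1) (hq2 : ∑ u, q2 u = 1)
    {l1 l1' : L1} (h1 : l1 ≠ l1') (l2 : L2)
    (r1 : B1 → ℝ) (r2 : B2 → ℝ) (hr1 : ∑ u, q1 u * r1 u = 1)
    (t : B1 → B2 → ℝ) :
    codebookMean q1 q2 (fun c1 c2 => r1 (c1 l1) * r2 (c2 l2) * t (c1 l1') (c2 l2))
      = ∑ u1, ∑ u2, q1 u1 * (q2 u2 * r2 u2) * t u1 u2 := by
  have e : ∀ c1, ∑ c2, iidLaw q1 c1 * iidLaw q2 c2 * (r1 (c1 l1) * r2 (c2 l2) * t (c1 l1') (c2 l2))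
      = iidLaw q1 c1 * (r1 (c1 l1) * ∑ u2, q2 u2 * r2 u2 * t (c1 l1') u2) := by
    intro c1
    have := sum_iidLaw_apply q2 hq2 l2 (fun u => r2 u * t (c1 l1') u)
    simp only [mul_assoc, ← Finset.mul_sum] at this ⊢
    rw [← this, Finset.mul_sum]
    simp only [Finset.mul_sum]
    exact Finset.sum_congr rfl fun _ _ => by ring
  unfold codebookMean
  simp only [e]
  rw [sum_iidLaw_apply₂ q1 hq1 h1 r1 (fun u => ∑ u2, q2 u2 * r2 u2 * t u u2), hr1, one_mul]
  simp only [Finset.mul_sum, mul_assoc]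

/-- Some pair of codebooks is at least as good as the average. -/
lemma exists_le_codebookMean (hq1 : ∀ u, 0 ≤ q1 u) (hq2 : ∀ u, 0 ≤ q2 u)
    (hs1 : ∑ u, q1 u = 1) (hs2 : ∑ u, q2 u = 1) (H : (L1 → B1) → (L2 → B2) → ℝ) :
    ∃ c1 c2, H c1 c2 ≤ codebookMean q1 q2 H := by
  by_contra! hcon
  have h1 : codebookMean q1 q2 (fun (_ : L1 → B1) (_ : L2 → B2) => codebookMean q1 q2 H)
      = codebookMean q1 q2 H := by
    have := codebookMean_const_mul (L1 := L1) (L2 := L2) q1 q2 (codebookMean q1 q2 H)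
      (fun _ _ => 1 * 1)
    rw [codebookMean_prod q1 q2 (fun _ => 1) (fun _ => 1)] at this
    simpa [sum_iidLaw _ hs1, sum_iidLaw _ hs2] using this
  obtain ⟨c1, -, hc1⟩ : ∃ c ∈ Finset.univ, iidLaw (ι := L1) q1 c ≠ 0 :=
    Finset.exists_ne_zero_of_sum_ne_zero (by rw [sum_iidLaw q1 hs1]; exact one_ne_zero)
  obtain ⟨c2, -, hc2⟩ : ∃ c ∈ Finset.univ, iidLaw (ι := L2) q2 c ≠ 0 :=
    Finset.exists_ne_zero_of_sum_ne_zero (by rw [sum_iidLaw q2 hs2]; exact one_ne_zero)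
  have hle : ∀ c1 c2, iidLaw q1 c1 * iidLaw q2 c2 * codebookMean q1 q2 H
      ≤ iidLaw q1 c1 * iidLaw q2 c2 * H c1 c2 := fun c1 c2 =>
    mul_le_mul_of_nonneg_left (hcon c1 c2).le
      (mul_nonneg (iidLaw_nonneg _ hq1 _) (iidLaw_nonneg _ hq2 _))
  have h2 : codebookMean q1 q2 (fun (_ : L1 → B1) (_ : L2 → B2) => codebookMean q1 q2 H)
      < codebookMean q1 q2 H := by
    conv_lhs => unfold codebookMean
    conv_rhs => unfold codebookMean
    refine Finset.sum_lt_sum (fun c1 _ => Finset.sum_le_sum fun c2 _ => hle c1 c2)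
      ⟨c1, Finset.mem_univ _, Finset.sum_lt_sum (fun c2 _ => hle c1 c2) ⟨c2, Finset.mem_univ _, ?_⟩⟩
    exact mul_lt_mul_of_pos_left (hcon c1 c2)
      (mul_pos (lt_of_le_of_ne (iidLaw_nonneg _ hq1 _) hc1.symm)
        (lt_of_le_of_ne (iidLaw_nonneg _ hq2 _) hc2.symm))
  linarith

omit [DecidableEq L1] [DecidableEq L2] in
/-- Replacing a product of pmfs by a product of other weights costs at most the `ℓ¹` distances. -/
lemma sum_prod_le_of_l1 (e1 ρ1 : L1 → ℝ) (e2 ρ2 : L2 → ℝ) (he1 : ∀ l, 0 ≤ e1 l)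
    (hs1 : ∑ l, e1 l = 1) (hρ2 : ∀ l, 0 ≤ ρ2 l) (F : L1 → L2 → ℝ) {B : ℝ}
    (hF0 : ∀ l1 l2, 0 ≤ F l1 l2) (hFB : ∀ l1 l2, F l1 l2 ≤ B) :
    ∑ l1, ∑ l2, e1 l1 * e2 l2 * F l1 l2 ≤ ∑ l1, ∑ l2, ρ1 l1 * ρ2 l2 * F l1 l2
      + B * (∑ l, |e2 l - ρ2 l| + (∑ l, |e1 l - ρ1 l|) * ∑ l, ρ2 l) := by
  have key : ∀ l1 l2, e1 l1 * e2 l2 * F l1 l2 ≤ ρ1 l1 * ρ2 l2 * F l1 l2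
      + B * (e1 l1 * |e2 l2 - ρ2 l2| + |e1 l1 - ρ1 l1| * ρ2 l2) := by
    intro l1 l2
    have hd : e1 l1 * e2 l2 - ρ1 l1 * ρ2 l2
        ≤ e1 l1 * |e2 l2 - ρ2 l2| + |e1 l1 - ρ1 l1| * ρ2 l2 := by
      have a := mul_le_mul_of_nonneg_left (le_abs_self (e2 l2 - ρ2 l2)) (he1 l1)
      have b := mul_le_mul_of_nonneg_right (le_abs_self (e1 l1 - ρ1 l1)) (hρ2 l2)
      linarith
    have hnn : 0 ≤ e1 l1 * |e2 l2 - ρ2 l2| + |e1 l1 - ρ1 l1| * ρ2 l2 :=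
      add_nonneg (mul_nonneg (he1 _) (abs_nonneg _)) (mul_nonneg (abs_nonneg _) (hρ2 _))
    have a := mul_le_mul_of_nonneg_right hd (hF0 l1 l2)
    have b := mul_le_mul_of_nonneg_right (hFB l1 l2) hnn
    nlinarith
  refine (Finset.sum_le_sum fun l1 _ => Finset.sum_le_sum fun l2 _ => key l1 l2).trans ?_
  simp only [Finset.sum_add_distrib, ← Finset.mul_sum, ← Finset.sum_mul, hs1, one_mul]
  rfl

/-- For a fixed source pair, averaged over the codebooks, the likelihood encoders may be replaced
by the idealised (unnormalised) weights `r / |L|`. -/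
lemma codebookMean_idealise [Nonempty L1] [Nonempty L2]
    (hq1 : ∀ u, 0 ≤ q1 u) (hq2 : ∀ u, 0 ≤ q2 u)
    (hs1 : ∑ u, q1 u = 1) (hs2 : ∑ u, q2 u = 1) (r1 : B1 → ℝ) (r2 : B2 → ℝ)
    (hr1 : ∀ u, 0 ≤ r1 u) (hr2 : ∀ u, 0 ≤ r2 u)
    (hm1 : ∑ u, q1 u * r1 u = 1) (hm2 : ∑ u, q2 u * r2 u = 1)
    {τ1 τ2 : ℝ} (hτ1 : 0 ≤ τ1) (hτ2 : 0 ≤ τ2)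
    (e1 : (L1 → B1) → L1 → ℝ) (e2 : (L2 → B2) → L2 → ℝ)
    (he1 : ∀ c l, 0 ≤ e1 c l) (hes1 : ∀ c, ∑ l, e1 c l = 1)
    (hd1 : ∀ c, ∑ l, |e1 c l - r1 (c l) / Fintype.card L1|
      = |1 - (∑ l, r1 (c l)) / Fintype.card L1|)
    (hd2 : ∀ c, ∑ l, |e2 c l - r2 (c l) / Fintype.card L2|
      = |1 - (∑ l, r2 (c l)) / Fintype.card L2|)
    (F : (L1 → B1) → (L2 → B2) → L1 → L2 → ℝ) {B : ℝ} (hB : 0 ≤ B)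
    (hF0 : ∀ c1 c2 l1 l2, 0 ≤ F c1 c2 l1 l2) (hFB : ∀ c1 c2 l1 l2, F c1 c2 l1 l2 ≤ B) :
    codebookMean q1 q2 (fun c1 c2 => ∑ l1, ∑ l2, e1 c1 l1 * e2 c2 l2 * F c1 c2 l1 l2)
      ≤ codebookMean q1 q2 (fun c1 c2 => ∑ l1, ∑ l2,
          r1 (c1 l1) / Fintype.card L1 * (r2 (c2 l2) / Fintype.card L2) * F c1 c2 l1 l2)
        + B * ((√(τ1 / Fintype.card L1) + 2 * ∑ u, q1 u * r1 u * (if r1 u > τ1 then 1 else 0))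
          + (√(τ2 / Fintype.card L2) + 2 * ∑ u, q2 u * r2 u * (if r2 u > τ2 then 1 else 0))) := by
  have hN2 : (0:ℝ) < Fintype.card L2 := by exact_mod_cast Fintype.card_pos
  refine (codebookMean_mono q1 q2 hq1 hq2 fun c1 c2 =>
    sum_prod_le_of_l1 (e1 c1) (fun l => r1 (c1 l) / Fintype.card L1) (e2 c2)
      (fun l => r2 (c2 l) / Fintype.card L2) (he1 c1) (hes1 c1)
      (fun l => div_nonneg (hr2 _) hN2.le) (F c1 c2) (hF0 c1 c2) (hFB c1 c2)).trans ?_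
  rw [codebookMean_add, codebookMean_const_mul, codebookMean_add, codebookMean_right q1 q2 hs1,
    codebookMean_prod]
  simp only [hd1, hd2]
  have hS2 : ∑ c2 : L2 → B2, iidLaw q2 c2 * ∑ l, r2 (c2 l) / (Fintype.card L2 : ℝ) = 1 := by
    simp only [Finset.mul_sum]
    rw [Finset.sum_comm]
    have : ∀ l, ∑ c2 : L2 → B2, iidLaw q2 c2 * (r2 (c2 l) / (Fintype.card L2 : ℝ))
        = 1 / (Fintype.card L2 : ℝ) := fun l => by
      simp only [← mul_div_assoc, ← Finset.sum_div]
      rw [sum_iidLaw_apply q2 hs2 l r2, hm2]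
    simp [this]
  rw [hS2, mul_one]
  have s1 := soft_covering (ι := L1) q1 hq1 hs1 r1 hr1 hm1 hτ1
  have s2 := soft_covering (ι := L2) q2 hq2 hs2 r2 hr2 hm2 hτ2
  have := mul_le_mul_of_nonneg_left (add_le_add s1 s2) hB
  linarith

end Codebook

/-! ### The joint decoder -/

/-- Expectation of `F` under the joint law `p(a₁,a₂) w₁(u₁|a₁) w₂(u₂|a₂)`. -/
noncomputable def jointMean {A1 A2 B1 B2 : Type*} [Fintype A1] [Fintype A2] [Fintype B1]
    [Fintype B2] (p : A1 → A2 → ℝ) (w1 : A1 → B1 → ℝ) (w2 : A2 → B2 → ℝ)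
    (F : A1 → A2 → B1 → B2 → ℝ) : ℝ :=
  ∑ a1, ∑ a2, ∑ u1, ∑ u2, p a1 a2 * w1 a1 u1 * w2 a2 u2 * F a1 a2 u1 u2

section OneShot
variable {A1 A2 B1 B2 Z K1 K2 J1 J2 : Type*} [Fintype A1] [Fintype A2] [Fintype B1] [Fintype B2]
  [Fintype K1] [Fintype K2] [Fintype J1] [Fintype J2]
  [DecidableEq K1] [DecidableEq K2] [DecidableEq J1] [DecidableEq J2]
  [Nonempty K1] [Nonempty K2] [Nonempty J1] [Nonempty J2]

omit [Fintype B1] [Fintype B2] [Fintype K1] [Fintype K2] [DecidableEq K1] [DecidableEq K2]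
  [Nonempty K1] [Nonempty K2] in
/-- A joint decoder that looks inside the bins `(k₁, k₂)` for a pair of codewords passing the
0/1 test `t`. It fails only if the true pair fails the test or another pair passes it. -/
lemma exists_decoder (t : B1 → B2 → ℝ) (ht : ∀ u1 u2, t u1 u2 = 0 ∨ t u1 u2 = 1)
    (φ : B1 → B2 → Z) (c1 : K1 × J1 → B1) (c2 : K2 × J2 → B2) :
    ∃ g : K1 → K2 → Z, ∀ (Λ : Z → ℝ) (B : ℝ), (∀ z, 0 ≤ Λ z) → (∀ z, Λ z ≤ B) →
      ∀ l1 l2, Λ (g l1.1 l2.1) ≤ (Λ (φ (c1 l1) (c2 l2)) + B * (1 - t (c1 l1) (c2 l2)))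
        + B * ∑ j1, ∑ j2, if j1 = l1.2 ∧ j2 = l2.2 then 0
            else t (c1 (l1.1, j1)) (c2 (l2.1, j2)) := by
  classical
  have hex : ∀ k1 k2, ∃ j : J1 × J2, (∃ i : J1 × J2, t (c1 (k1, i.1)) (c2 (k2, i.2)) = 1) →
      t (c1 (k1, j.1)) (c2 (k2, j.2)) = 1 := by
    intro k1 k2
    by_cases h : ∃ i : J1 × J2, t (c1 (k1, i.1)) (c2 (k2, i.2)) = 1
    · exact ⟨h.choose, fun _ => h.choose_spec⟩
    · exact ⟨Classical.arbitrary _, fun h' => absurd h' h⟩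
  choose j hj using hex
  refine ⟨fun k1 k2 => φ (c1 (k1, (j k1 k2).1)) (c2 (k2, (j k1 k2).2)), ?_⟩
  rintro Λ B h0 hB ⟨k1, i1⟩ ⟨k2, i2⟩
  have hB0 : 0 ≤ B := (h0 (φ (c1 (k1, i1)) (c2 (k2, i2)))).trans (hB _)
  have ht0 : ∀ u1 u2, 0 ≤ t u1 u2 := fun u1 u2 => by rcases ht u1 u2 with h | h <;> simp [h]
  have hnn : ∀ j1 j2, 0 ≤ (if j1 = i1 ∧ j2 = i2 then 0
      else t (c1 (k1, j1)) (c2 (k2, j2)) : ℝ) := fun j1 j2 => by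
    split_ifs; exacts [le_rfl, ht0 _ _]
  have hsum : 0 ≤ ∑ j1, ∑ j2, (if j1 = i1 ∧ j2 = i2 then 0
      else t (c1 (k1, j1)) (c2 (k2, j2)) : ℝ) :=
    Finset.sum_nonneg fun j1 _ => Finset.sum_nonneg fun j2 _ => hnn j1 j2
  rcases ht (c1 (k1, i1)) (c2 (k2, i2)) with h | h
  · have := hB (φ (c1 (k1, (j k1 k2).1)) (c2 (k2, (j k1 k2).2)))
    have := h0 (φ (c1 (k1, i1)) (c2 (k2, i2)))
    have := mul_nonneg hB0 hsum
    simp only [h]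
    linarith
  · have hpass := hj k1 k2 ⟨(i1, i2), h⟩
    by_cases he : (j k1 k2).1 = i1 ∧ (j k1 k2).2 = i2
    · have := mul_nonneg hB0 hsum
      simp only [h, he.1, he.2]
      linarith
    · have h1 : (1:ℝ) ≤ ∑ j1, ∑ j2, (if j1 = i1 ∧ j2 = i2 then 0
          else t (c1 (k1, j1)) (c2 (k2, j2)) : ℝ) := by
        calc (1:ℝ) = (if (j k1 k2).1 = i1 ∧ (j k1 k2).2 = i2 then 0
              else t (c1 (k1, (j k1 k2).1)) (c2 (k2, (j k1 k2).2)) : ℝ) := by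
              rw [if_neg he, hpass]
          _ ≤ ∑ j2, (if (j k1 k2).1 = i1 ∧ j2 = i2 then 0
              else t (c1 (k1, (j k1 k2).1)) (c2 (k2, j2)) : ℝ) :=
              Finset.single_le_sum (f := fun j2 => (if (j k1 k2).1 = i1 ∧ j2 = i2 then 0
                else t (c1 (k1, (j k1 k2).1)) (c2 (k2, j2)) : ℝ))
                (fun j2 _ => hnn _ j2) (Finset.mem_univ _)
          _ ≤ _ := Finset.single_le_sum (f := fun j1 => ∑ j2, (if j1 = i1 ∧ j2 = i2 then 0
                else t (c1 (k1, j1)) (c2 (k2, j2)) : ℝ))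
                (fun j1 _ => Finset.sum_nonneg fun j2 _ => hnn j1 j2) (Finset.mem_univ _)
      have := hB (φ (c1 (k1, (j k1 k2).1)) (c2 (k2, (j k1 k2).2)))
      have := h0 (φ (c1 (k1, i1)) (c2 (k2, i2)))
      have := mul_le_mul_of_nonneg_left h1 hB0
      simp only [h]
      linarith

omit [Nonempty K1] [Nonempty K2] [Nonempty J1] [Nonempty J2] in
/-- Averaging the decoder bound of `exists_decoder` over the codebooks with idealised encoders,
for a fixed source pair. -/
lemma codebookMean_ideal_loss [Nonempty (K1 × J1)] [Nonempty (K2 × J2)]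
    (q1 : B1 → ℝ) (q2 : B2 → ℝ) (hs1 : ∑ u, q1 u = 1) (hs2 : ∑ u, q2 u = 1)
    (r1 : B1 → ℝ) (r2 : B2 → ℝ) (H t : B1 → B2 → ℝ) (B : ℝ) :
    codebookMean q1 q2 (fun (c1 : K1 × J1 → B1) (c2 : K2 × J2 → B2) => ∑ l1, ∑ l2,
        r1 (c1 l1) / Fintype.card (K1 × J1) * (r2 (c2 l2) / Fintype.card (K2 × J2)) *
          (H (c1 l1) (c2 l2) + B * ∑ j1, ∑ j2, if j1 = l1.2 ∧ j2 = l2.2 then 0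
            else t (c1 (l1.1, j1)) (c2 (l2.1, j2))))
      = ∑ u1, ∑ u2, q1 u1 * q2 u2 * (r1 u1 * r2 u2 * H u1 u2)
        + B / (Fintype.card (K1 × J1) * Fintype.card (K2 × J2)) *
          ∑ l1 : K1 × J1, ∑ l2 : K2 × J2, ∑ j1, ∑ j2, if j1 = l1.2 ∧ j2 = l2.2 then 0 else
            codebookMean q1 q2 (fun (c1 : K1 × J1 → B1) (c2 : K2 × J2 → B2) =>
              r1 (c1 l1) * r2 (c2 l2) * t (c1 (l1.1, j1)) (c2 (l2.1, j2))) := by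
  have hN1 : (0:ℝ) < Fintype.card (K1 × J1) := by exact_mod_cast Fintype.card_pos
  have hN2 : (0:ℝ) < Fintype.card (K2 × J2) := by exact_mod_cast Fintype.card_pos
  have e : ∀ (l1 : K1 × J1) (l2 : K2 × J2),
      codebookMean q1 q2 (fun (c1 : K1 × J1 → B1) (c2 : K2 × J2 → B2) =>
        r1 (c1 l1) / Fintype.card (K1 × J1) * (r2 (c2 l2) / Fintype.card (K2 × J2)) *
          (H (c1 l1) (c2 l2) + B * ∑ j1, ∑ j2, if j1 = l1.2 ∧ j2 = l2.2 then 0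
            else t (c1 (l1.1, j1)) (c2 (l2.1, j2))))
      = (∑ u1, ∑ u2, q1 u1 * q2 u2 * (r1 u1 * r2 u2 * H u1 u2)) /
          (Fintype.card (K1 × J1) * Fintype.card (K2 × J2)) +
        B / (Fintype.card (K1 × J1) * Fintype.card (K2 × J2)) * ∑ j1, ∑ j2,
          if j1 = l1.2 ∧ j2 = l2.2 then 0 else
            codebookMean q1 q2 (fun (c1 : K1 × J1 → B1) (c2 : K2 × J2 → B2) =>
              r1 (c1 l1) * r2 (c2 l2) * t (c1 (l1.1, j1)) (c2 (l2.1, j2))) := by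
    intro l1 l2
    rw [← codebookMean_apply q1 q2 hs1 hs2 l1 l2 (fun u1 u2 => r1 u1 * r2 u2 * H u1 u2)]
    have e1 : ∀ j1 j2, (if j1 = l1.2 ∧ j2 = l2.2 then 0 else
            codebookMean q1 q2 (fun (c1 : K1 × J1 → B1) (c2 : K2 × J2 → B2) =>
              r1 (c1 l1) * r2 (c2 l2) * t (c1 (l1.1, j1)) (c2 (l2.1, j2))))
        = codebookMean q1 q2 (fun (c1 : K1 × J1 → B1) (c2 : K2 × J2 → B2) =>
            if j1 = l1.2 ∧ j2 = l2.2 then 0 else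
              r1 (c1 l1) * r2 (c2 l2) * t (c1 (l1.1, j1)) (c2 (l2.1, j2))) := by
      intro j1 j2
      split_ifs
      · simp [codebookMean]
      · rfl
    simp only [e1, ← codebookMean_sum]
    rw [div_eq_inv_mul, ← codebookMean_const_mul, ← codebookMean_const_mul, ← codebookMean_add]
    congr 1
    funext c1 c2
    have e2 : (∑ j1, ∑ j2, if j1 = l1.2 ∧ j2 = l2.2 then 0 else
              r1 (c1 l1) * r2 (c2 l2) * t (c1 (l1.1, j1)) (c2 (l2.1, j2)))
        = r1 (c1 l1) * r2 (c2 l2) * ∑ j1, ∑ j2, if j1 = l1.2 ∧ j2 = l2.2 then 0 else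
            t (c1 (l1.1, j1)) (c2 (l2.1, j2)) := by
      simp only [Finset.mul_sum, mul_ite, mul_zero]
    rw [e2]
    field_simp
  simp only [codebookMean_sum, e]
  simp only [Finset.sum_add_distrib, ← Finset.mul_sum]
  congr 1
  simp only [Finset.sum_const, Finset.card_univ, nsmul_eq_mul]
  field_simp

/-! ### The one-shot bound -/

omit [Fintype B1] [Fintype K1] [Fintype K2] [Fintype J1] [Fintype J2]
  [DecidableEq K1] [DecidableEq K2] [DecidableEq J1] [DecidableEq J2]
  [Nonempty K1] [Nonempty K2] [Nonempty J1] [Nonempty J2] in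
/-- The likelihood ratio `w(u|a) / q(u)` turns `q` back into `w` at every source symbol of positive
probability, where `q u = 0` forces `w a u = 0`. -/
lemma lik_mul {A : Type*} [Fintype A] (p : A → ℝ) (hp : ∀ a, 0 ≤ p a) (w : A → B1 → ℝ)
    (hw : ∀ a u, 0 ≤ w a u) (q : B1 → ℝ) (hq : ∀ u, q u = ∑ a, p a * w a u)
    {a : A} (ha : p a ≠ 0) (u : B1) : q u * (w a u / q u) = w a u := by
  by_cases h : q u = 0
  · have h' := hq u
    rw [h] at h'
    have := (Finset.sum_eq_zero_iff_of_nonneg fun a _ => mul_nonneg (hp a) (hw a u)).mp h'.symm a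
      (Finset.mem_univ a)
    rw [h, (mul_eq_zero.mp this).resolve_left ha, zero_mul]
  · field_simp

omit [Fintype K1] [Fintype K2] [Fintype J1] [Fintype J2] [Nonempty K1] [Nonempty K2]
  [Nonempty J1] [Nonempty J2] in
/-- Mutual packing: whichever of the two codewords differ from the true ones, the probability that
the wrong pair passes the test `t` is that under the product of the marginals. When one codeword
is the true one, this needs the average over the sources, which gives that codeword its marginal
law independently of the wrong one. Here `r1 = w1 / q1` and `r2 = w2 / q2` are the idealised
encoder weights. -/
lemma packing [Fintype (K1 × J1)] [Fintype (K2 × J2)]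
    (p : A1 → A2 → ℝ) (w1 : A1 → B1 → ℝ) (w2 : A2 → B2 → ℝ)
    (hp1 : ∑ a1, ∑ a2, p a1 a2 = 1)
    (q1 : B1 → ℝ) (q2 : B2 → ℝ) (hs1 : ∑ u, q1 u = 1) (hs2 : ∑ u, q2 u = 1)
    (hq1 : ∀ u, q1 u = ∑ a1, ∑ a2, p a1 a2 * w1 a1 u)
    (hq2 : ∀ u, q2 u = ∑ a1, ∑ a2, p a1 a2 * w2 a2 u)
    (r1 : A1 → B1 → ℝ) (r2 : A2 → B2 → ℝ)
    (hr1 : ∀ a1 a2, p a1 a2 ≠ 0 → ∀ u, q1 u * r1 a1 u = w1 a1 u)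
    (hr2 : ∀ a1 a2, p a1 a2 ≠ 0 → ∀ u, q2 u * r2 a2 u = w2 a2 u)
    (hw1 : ∀ a, ∑ u, w1 a u = 1) (hw2 : ∀ a, ∑ u, w2 a u = 1)
    (t : B1 → B2 → ℝ) (l1 l1' : K1 × J1) (l2 l2' : K2 × J2) (hne : ¬ (l1 = l1' ∧ l2 = l2')) :
    ∑ a1, ∑ a2, p a1 a2 * codebookMean q1 q2 (fun c1 c2 =>
      r1 a1 (c1 l1) * r2 a2 (c2 l2) * t (c1 l1') (c2 l2'))
      = ∑ u1, ∑ u2, q1 u1 * q2 u2 * t u1 u2 := by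
  have hm1 : ∀ a1 a2, p a1 a2 ≠ 0 → ∑ u, q1 u * r1 a1 u = 1 := fun a1 a2 h => by
    simp only [hr1 a1 a2 h, hw1]
  have hm2 : ∀ a1 a2, p a1 a2 ≠ 0 → ∑ u, q2 u * r2 a2 u = 1 := fun a1 a2 h => by
    simp only [hr2 a1 a2 h, hw2]
  by_cases h1 : l1 = l1'
  · have h2 : l2 ≠ l2' := fun h => hne ⟨h1, h⟩
    subst h1
    have e : ∀ a1 a2, p a1 a2 * codebookMean q1 q2 (fun c1 c2 =>
        r1 a1 (c1 l1) * r2 a2 (c2 l2) * t (c1 l1) (c2 l2'))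
        = ∑ u1, (p a1 a2 * w1 a1 u1) * ∑ u2, q2 u2 * t u1 u2 := by
      intro a1 a2
      by_cases h : p a1 a2 = 0
      · simp [h]
      · rw [codebookMean_packing_right q1 q2 hs1 hs2 l1 h2 _ _ (hm2 a1 a2 h)]
        simp only [hr1 a1 a2 h, Finset.mul_sum, mul_assoc]
    simp only [e]
    simp_rw [Finset.sum_comm (s := (Finset.univ : Finset A2)) (t := (Finset.univ : Finset B1))]
    rw [Finset.sum_comm]
    have hpull : ∀ u X, ∑ a1, ∑ a2, p a1 a2 * w1 a1 u * X = q1 u * X := fun u X => by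
      rw [hq1]; simp only [Finset.sum_mul]
    simp only [hpull]
    simp only [Finset.mul_sum, mul_assoc]
  · by_cases h2 : l2 = l2'
    · subst h2
      have e : ∀ a1 a2, p a1 a2 * codebookMean q1 q2 (fun c1 c2 =>
          r1 a1 (c1 l1) * r2 a2 (c2 l2) * t (c1 l1') (c2 l2))
          = ∑ u2, (p a1 a2 * w2 a2 u2) * ∑ u1, q1 u1 * t u1 u2 := by
        intro a1 a2
        by_cases h : p a1 a2 = 0
        · simp [h]
        · rw [codebookMean_packing_left q1 q2 hs1 hs2 h1 l2 _ _ (hm1 a1 a2 h)]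
          simp only [hr2 a1 a2 h, Finset.mul_sum]
          rw [Finset.sum_comm]
          exact Finset.sum_congr rfl fun _ _ => Finset.sum_congr rfl fun _ _ => by ring
      simp only [e]
      simp_rw [Finset.sum_comm (s := (Finset.univ : Finset A2)) (t := (Finset.univ : Finset B2))]
      rw [Finset.sum_comm]
      simp only [← Finset.sum_mul, ← hq2]
      simp only [Finset.mul_sum]
      rw [Finset.sum_comm]
      exact Finset.sum_congr rfl fun _ _ => Finset.sum_congr rfl fun _ _ => by ring
    · have e : ∀ a1 a2, p a1 a2 * codebookMean q1 q2 (fun c1 c2 =>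
          r1 a1 (c1 l1) * r2 a2 (c2 l2) * t (c1 l1') (c2 l2'))
          = p a1 a2 * ∑ u1, ∑ u2, q1 u1 * q2 u2 * t u1 u2 := by
        intro a1 a2
        by_cases h : p a1 a2 = 0
        · simp [h]
        · rw [codebookMean_packing_both q1 q2 hs1 hs2 h1 h2 _ _ (hm1 a1 a2 h) (hm2 a1 a2 h)]
      simp only [e, ← Finset.sum_mul, hp1, one_mul]

/-- One-shot Berger–Tung bound with likelihood encoders and a threshold joint decoder. The messages
`K₁`, `K₂` index bins of `J₁`, `J₂` codewords. For a loss `0 ≤ Λ ≤ B` the excess over the ideal loss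
comes from soft covering (thresholds `τ₁`, `τ₂`), from the true pair of codewords failing the test
`q₁₂ > γ q₁ q₂`, and from wrong pairs in the bins passing it. -/
theorem one_shot (p : A1 → A2 → ℝ) (w1 : A1 → B1 → ℝ) (w2 : A2 → B2 → ℝ)
    (hp0 : ∀ a1 a2, 0 ≤ p a1 a2) (hp1 : ∑ a1, ∑ a2, p a1 a2 = 1)
    (hw10 : ∀ a u, 0 ≤ w1 a u) (hw1 : ∀ a, ∑ u, w1 a u = 1)
    (hw20 : ∀ a u, 0 ≤ w2 a u) (hw2 : ∀ a, ∑ u, w2 a u = 1)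
    (q1 : B1 → ℝ) (q2 : B2 → ℝ) (q12 : B1 → B2 → ℝ)
    (hq1 : ∀ u, q1 u = ∑ a1, ∑ a2, p a1 a2 * w1 a1 u)
    (hq2 : ∀ u, q2 u = ∑ a1, ∑ a2, p a1 a2 * w2 a2 u)
    (hq12 : ∀ u1 u2, q12 u1 u2 = ∑ a1, ∑ a2, p a1 a2 * w1 a1 u1 * w2 a2 u2)
    (φ : B1 → B2 → Z) (Λ : A1 → A2 → Z → ℝ) {B : ℝ} (hB : 0 ≤ B)
    (hΛ0 : ∀ a1 a2 z, 0 ≤ Λ a1 a2 z) (hΛB : ∀ a1 a2 z, Λ a1 a2 z ≤ B)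
    {τ1 τ2 γ : ℝ} (hτ1 : 0 ≤ τ1) (hτ2 : 0 ≤ τ2) (hγ : 0 < γ) :
    ∃ (e1 : A1 → K1 → ℝ) (e2 : A2 → K2 → ℝ) (g : K1 → K2 → Z),
      (∀ a, (∀ k, 0 ≤ e1 a k) ∧ ∑ k, e1 a k = 1) ∧
      (∀ a, (∀ k, 0 ≤ e2 a k) ∧ ∑ k, e2 a k = 1) ∧
      ∑ a1, ∑ a2, p a1 a2 * ∑ k1, ∑ k2, e1 a1 k1 * e2 a2 k2 * Λ a1 a2 (g k1 k2)
        ≤ jointMean p w1 w2 (fun a1 a2 u1 u2 => Λ a1 a2 (φ u1 u2))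
          + B * (√(τ1 / (Fintype.card K1 * Fintype.card J1))
            + 2 * jointMean p w1 w2 (fun a1 _ u1 _ => if w1 a1 u1 / q1 u1 > τ1 then 1 else 0)
            + √(τ2 / (Fintype.card K2 * Fintype.card J2))
            + 2 * jointMean p w1 w2 (fun _ a2 _ u2 => if w2 a2 u2 / q2 u2 > τ2 then 1 else 0)
            + jointMean p w1 w2 (fun _ _ u1 u2 => 1 -
                if q12 u1 u2 > γ * (q1 u1 * q2 u2) then 1 else 0)
            + (Fintype.card J1 * Fintype.card J2 - 1) / γ) := by
  classical
  set r1 : A1 → B1 → ℝ := fun a u => w1 a u / q1 u with hr1d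
  set r2 : A2 → B2 → ℝ := fun a u => w2 a u / q2 u with hr2d
  set t : B1 → B2 → ℝ := fun u1 u2 => if q12 u1 u2 > γ * (q1 u1 * q2 u2) then 1 else 0 with htd
  have hN1 : (0:ℝ) < Fintype.card (K1 × J1) := by exact_mod_cast Fintype.card_pos
  have hN2 : (0:ℝ) < Fintype.card (K2 × J2) := by exact_mod_cast Fintype.card_pos
  have hq10 : ∀ u, 0 ≤ q1 u := fun u => by
    rw [hq1]; exact Finset.sum_nonneg fun _ _ => Finset.sum_nonneg fun _ _ =>
      mul_nonneg (hp0 _ _) (hw10 _ _)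
  have hq20 : ∀ u, 0 ≤ q2 u := fun u => by
    rw [hq2]; exact Finset.sum_nonneg fun _ _ => Finset.sum_nonneg fun _ _ =>
      mul_nonneg (hp0 _ _) (hw20 _ _)
  have hs1 : ∑ u, q1 u = 1 := by
    simp only [hq1]
    rw [Finset.sum_comm]
    simp_rw [Finset.sum_comm (s := (Finset.univ : Finset B1)) (t := (Finset.univ : Finset A2)),
      ← Finset.mul_sum, hw1, mul_one]
    exact hp1
  have hs2 : ∑ u, q2 u = 1 := by
    simp only [hq2]
    rw [Finset.sum_comm]
    simp_rw [Finset.sum_comm (s := (Finset.univ : Finset B2)) (t := (Finset.univ : Finset A2)),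
      ← Finset.mul_sum, hw2, mul_one]
    exact hp1
  have hq120 : ∀ u1 u2, 0 ≤ q12 u1 u2 := fun u1 u2 => by
    rw [hq12]; exact Finset.sum_nonneg fun _ _ => Finset.sum_nonneg fun _ _ =>
      mul_nonneg (mul_nonneg (hp0 _ _) (hw10 _ _)) (hw20 _ _)
  have hs12 : ∑ u1, ∑ u2, q12 u1 u2 = 1 := by
    rw [← hs1]
    refine Finset.sum_congr rfl fun u1 _ => ?_
    simp only [hq12, hq1]
    rw [Finset.sum_comm]
    refine Finset.sum_congr rfl fun a1 _ => ?_
    rw [Finset.sum_comm]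
    exact Finset.sum_congr rfl fun a2 _ => by rw [← Finset.mul_sum, hw2, mul_one]
  have hr1 : ∀ a1 a2, p a1 a2 ≠ 0 → ∀ u, q1 u * r1 a1 u = w1 a1 u := fun a1 a2 h u =>
    lik_mul (fun a : A1 × A2 => p a.1 a.2) (fun _ => hp0 _ _) (fun a => w1 a.1)
      (fun _ _ => hw10 _ _) q1 (fun u => by rw [hq1, Fintype.sum_prod_type]) (a := (a1, a2)) h u
  have hr2 : ∀ a1 a2, p a1 a2 ≠ 0 → ∀ u, q2 u * r2 a2 u = w2 a2 u := fun a1 a2 h u =>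
    lik_mul (fun a : A1 × A2 => p a.1 a.2) (fun _ => hp0 _ _) (fun a => w2 a.2)
      (fun _ _ => hw20 _ _) q2 (fun u => by rw [hq2, Fintype.sum_prod_type]) (a := (a1, a2)) h u
  have hr10 : ∀ a u, 0 ≤ r1 a u := fun a u => div_nonneg (hw10 a u) (hq10 u)
  have hr20 : ∀ a u, 0 ≤ r2 a u := fun a u => div_nonneg (hw20 a u) (hq20 u)
  have ht : ∀ u1 u2, t u1 u2 = 0 ∨ t u1 u2 = 1 := fun u1 u2 => by
    simp only [htd]; split_ifs <;> simp
  -- change of measure: on the test event the product law is at most the joint law over `γ`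
  have hT : ∑ u1, ∑ u2, q1 u1 * q2 u2 * t u1 u2 ≤ 1 / γ := by
    rw [← hs12, Finset.sum_div]
    refine Finset.sum_le_sum fun u1 _ => ?_
    rw [Finset.sum_div]
    refine Finset.sum_le_sum fun u2 _ => ?_
    simp only [htd]
    split_ifs with h
    · rw [le_div_iff₀ hγ]; linarith
    · simpa using div_nonneg (hq120 u1 u2) hγ.le
  choose e1 he10 he11 he1d using fun (c : K1 × J1 → B1) (a : A1) =>
    exists_likelihood_encoder (fun l => r1 a (c l)) (fun l => hr10 _ _)
  choose e2 he20 he21 he2d using fun (c : K2 × J2 → B2) (a : A2) =>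
    exists_likelihood_encoder (fun l => r2 a (c l)) (fun l => hr20 _ _)
  choose g hg using fun (c1 : K1 × J1 → B1) (c2 : K2 × J2 → B2) => exists_decoder t ht φ c1 c2
  -- the expected loss of the scheme as a function of the codebooks
  set G : (K1 × J1 → B1) → (K2 × J2 → B2) → ℝ := fun c1 c2 => ∑ a1, ∑ a2, p a1 a2 *
    ∑ l1, ∑ l2, e1 c1 a1 l1 * e2 c2 a2 l2 * Λ a1 a2 (g c1 c2 l1.1 l2.1) with hG
  obtain ⟨c1, c2, hc⟩ := exists_le_codebookMean q1 q2 hq10 hq20 hs1 hs2 G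
  refine ⟨fun a k => ∑ j, e1 c1 a (k, j), fun a k => ∑ j, e2 c2 a (k, j), g c1 c2,
    fun a => ⟨fun k => Finset.sum_nonneg fun j _ => he10 _ _ _, ?_⟩,
    fun a => ⟨fun k => Finset.sum_nonneg fun j _ => he20 _ _ _, ?_⟩, ?_⟩
  · rw [← he11 c1 a, Fintype.sum_prod_type]
  · rw [← he21 c2 a, Fintype.sum_prod_type]
  have hGeq : ∑ a1, ∑ a2, p a1 a2 * ∑ k1, ∑ k2, (∑ j, e1 c1 a1 (k1, j)) * (∑ j, e2 c2 a2 (k2, j)) *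
      Λ a1 a2 (g c1 c2 k1 k2) = G c1 c2 := by
    simp only [hG, Fintype.sum_prod_type]
    refine Finset.sum_congr rfl fun a1 _ => Finset.sum_congr rfl fun a2 _ => ?_
    congr 1
    refine Finset.sum_congr rfl fun k1 _ => ?_
    rw [Finset.sum_comm]
    refine Finset.sum_congr rfl fun k2 _ => ?_
    rw [Finset.sum_mul_sum]
    simp only [Finset.sum_mul]
  rw [hGeq]
  refine hc.trans ?_
  -- per source pair: idealise the encoders, then bound the loss of the decoder
  set δ1 : A1 → ℝ := fun a => √(τ1 / Fintype.card (K1 × J1)) +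
    2 * ∑ u, q1 u * r1 a u * (if r1 a u > τ1 then 1 else 0) with hδ1
  set δ2 : A2 → ℝ := fun a => √(τ2 / Fintype.card (K2 × J2)) +
    2 * ∑ u, q2 u * r2 a u * (if r2 a u > τ2 then 1 else 0) with hδ2
  set pk : A1 → A2 → (K1 × J1) → (K2 × J2) → J1 → J2 → ℝ := fun a1 a2 l1 l2 j1 j2 =>
    codebookMean q1 q2 (fun (c1 : K1 × J1 → B1) (c2 : K2 × J2 → B2) =>
      r1 a1 (c1 l1) * r2 a2 (c2 l2) * t (c1 (l1.1, j1)) (c2 (l2.1, j2))) with hpk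
  have hper : ∀ a1 a2, p a1 a2 * codebookMean q1 q2 (fun c1 c2 => ∑ l1, ∑ l2,
        e1 c1 a1 l1 * e2 c2 a2 l2 * Λ a1 a2 (g c1 c2 l1.1 l2.1))
      ≤ (∑ u1, ∑ u2, p a1 a2 * w1 a1 u1 * w2 a2 u2 * (Λ a1 a2 (φ u1 u2) + B * (1 - t u1 u2)))
        + B / (Fintype.card (K1 × J1) * Fintype.card (K2 × J2)) *
          (∑ l1 : K1 × J1, ∑ l2 : K2 × J2, ∑ j1, ∑ j2, if j1 = l1.2 ∧ j2 = l2.2 then 0 else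
            p a1 a2 * pk a1 a2 l1 l2 j1 j2)
        + B * (p a1 a2 * δ1 a1 + p a1 a2 * δ2 a2) := by
    intro a1 a2
    by_cases h : p a1 a2 = 0
    · simp [h]
    have hm1 : ∑ u, q1 u * r1 a1 u = 1 := by simp only [hr1 a1 a2 h, hw1]
    have hm2 : ∑ u, q2 u * r2 a2 u = 1 := by simp only [hr2 a1 a2 h, hw2]
    have s1 := codebookMean_idealise q1 q2 hq10 hq20 hs1 hs2 (r1 a1) (r2 a2) (hr10 a1) (hr20 a2)
      hm1 hm2 hτ1 hτ2 (fun c => e1 c a1) (fun c => e2 c a2) (fun c => he10 c a1)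
      (fun c => he11 c a1) (fun c => he1d c a1) (fun c => he2d c a2)
      (fun c1 c2 l1 l2 => Λ a1 a2 (g c1 c2 l1.1 l2.1)) hB (fun _ _ _ _ => hΛ0 _ _ _)
      (fun _ _ _ _ => hΛB _ _ _)
    have s2 := codebookMean_mono q1 q2 hq10 hq20
      (fun c1 c2 => Finset.sum_le_sum (s := (Finset.univ : Finset (K1 × J1))) fun l1 _ =>
        Finset.sum_le_sum (s := (Finset.univ : Finset (K2 × J2))) fun l2 _ =>
        mul_le_mul_of_nonneg_left (hg c1 c2 (Λ a1 a2) B (hΛ0 a1 a2) (hΛB a1 a2) l1 l2)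
          (mul_nonneg (div_nonneg (hr10 a1 (c1 l1)) hN1.le)
            (div_nonneg (hr20 a2 (c2 l2)) hN2.le)))
    rw [codebookMean_ideal_loss q1 q2 hs1 hs2 (r1 a1) (r2 a2)
      (fun u1 u2 => Λ a1 a2 (φ u1 u2) + B * (1 - t u1 u2)) t B] at s2
    have s3 := mul_le_mul_of_nonneg_left (s1.trans (add_le_add_left s2 _)) (hp0 a1 a2)
    refine s3.trans (le_of_eq ?_)
    have e3 : ∑ u1, ∑ u2, p a1 a2 * w1 a1 u1 * w2 a2 u2 * (Λ a1 a2 (φ u1 u2) + B * (1 - t u1 u2))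
        = p a1 a2 * ∑ u1, ∑ u2, q1 u1 * q2 u2 * (r1 a1 u1 * r2 a2 u2 *
            (Λ a1 a2 (φ u1 u2) + B * (1 - t u1 u2))) := by
      simp only [Finset.mul_sum]
      refine Finset.sum_congr rfl fun u1 _ => Finset.sum_congr rfl fun u2 _ => ?_
      rw [← hr1 a1 a2 h, ← hr2 a1 a2 h]; ring
    have e4 : (∑ l1 : K1 × J1, ∑ l2 : K2 × J2, ∑ j1, ∑ j2, if j1 = l1.2 ∧ j2 = l2.2 then 0 else
            p a1 a2 * pk a1 a2 l1 l2 j1 j2)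
        = p a1 a2 * ∑ l1 : K1 × J1, ∑ l2 : K2 × J2, ∑ j1, ∑ j2,
          if j1 = l1.2 ∧ j2 = l2.2 then 0 else pk a1 a2 l1 l2 j1 j2 := by
      simp only [Finset.mul_sum, mul_ite, mul_zero]
    rw [e3, e4]
    ring
  have hsplit : codebookMean q1 q2 G = ∑ a1, ∑ a2, p a1 a2 * codebookMean q1 q2
      (fun c1 c2 => ∑ l1, ∑ l2, e1 c1 a1 l1 * e2 c2 a2 l2 * Λ a1 a2 (g c1 c2 l1.1 l2.1)) := by
    simp only [hG, ← codebookMean_const_mul, ← codebookMean_sum]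
  rw [hsplit]
  refine (Finset.sum_le_sum fun a1 _ => Finset.sum_le_sum fun a2 _ => hper a1 a2).trans ?_
  simp only [Finset.sum_add_distrib, ← Finset.mul_sum]
  -- the ideal loss with the failures of the true pair
  have hA : ∑ a1, ∑ a2, ∑ u1, ∑ u2,
      p a1 a2 * w1 a1 u1 * w2 a2 u2 * (Λ a1 a2 (φ u1 u2) + B * (1 - t u1 u2))
      = jointMean p w1 w2 (fun a1 a2 u1 u2 => Λ a1 a2 (φ u1 u2))
        + B * jointMean p w1 w2 (fun _ _ u1 u2 => 1 - t u1 u2) := by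
    simp only [jointMean, Finset.mul_sum, ← Finset.sum_add_distrib]
    exact Finset.sum_congr rfl fun _ _ => Finset.sum_congr rfl fun _ _ =>
      Finset.sum_congr rfl fun _ _ => Finset.sum_congr rfl fun _ _ => by ring
  -- the wrong pairs: `|J₁| |J₂| - 1` of them in each pair of bins
  have hP : ∑ a1, ∑ a2, (∑ l1 : K1 × J1, ∑ l2 : K2 × J2, ∑ j1, ∑ j2,
        if j1 = l1.2 ∧ j2 = l2.2 then 0 else p a1 a2 * pk a1 a2 l1 l2 j1 j2)
      ≤ Fintype.card (K1 × J1) * Fintype.card (K2 × J2) *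
        ((Fintype.card J1 * Fintype.card J2 - 1) / γ) := by
    have sw : ∑ a1, ∑ a2, (∑ l1 : K1 × J1, ∑ l2 : K2 × J2, ∑ j1, ∑ j2,
        if j1 = l1.2 ∧ j2 = l2.2 then 0 else p a1 a2 * pk a1 a2 l1 l2 j1 j2)
        = ∑ l1 : K1 × J1, ∑ l2 : K2 × J2, ∑ j1, ∑ j2, ∑ a1, ∑ a2,
          if j1 = l1.2 ∧ j2 = l2.2 then 0 else p a1 a2 * pk a1 a2 l1 l2 j1 j2 := by
      have := Finset.sum_comm (s := (Finset.univ : Finset (A1 × A2)))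
        (t := (Finset.univ : Finset ((K1 × J1) × (K2 × J2) × J1 × J2)))
        (f := fun a x => if x.2.2.1 = x.1.2 ∧ x.2.2.2 = x.2.1.2 then (0:ℝ) else
          p a.1 a.2 * pk a.1 a.2 x.1 x.2.1 x.2.2.1 x.2.2.2)
      simpa only [Fintype.sum_prod_type] using this
    rw [sw]
    have hone : ∀ (l1 : K1 × J1) (l2 : K2 × J2) j1 j2, (∑ a1, ∑ a2,
        if j1 = l1.2 ∧ j2 = l2.2 then 0 else p a1 a2 * pk a1 a2 l1 l2 j1 j2)
        ≤ 1 / γ - if j1 = l1.2 then (if j2 = l2.2 then 1 / γ else 0) else 0 := by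
      intro l1 l2 j1 j2
      by_cases hj : j1 = l1.2 ∧ j2 = l2.2
      · simp [hj]
      · have hrhs : (if j1 = l1.2 then (if j2 = l2.2 then 1 / γ else 0) else 0) = 0 := by
          split_ifs with h1 h2
          · exact absurd ⟨h1, h2⟩ hj
          · rfl
          · rfl
        simp only [if_neg hj]
        rw [hrhs, sub_zero]
        refine le_trans (le_of_eq ?_) hT
        refine packing p w1 w2 hp1 q1 q2 hs1 hs2 hq1 hq2 r1 r2 hr1 hr2 hw1 hw2 t
          l1 (l1.1, j1) l2 (l2.1, j2) ?_
        rintro ⟨h1, h2⟩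
        exact hj ⟨by rw [h1], by rw [h2]⟩
    refine (Finset.sum_le_sum fun l1 _ => Finset.sum_le_sum fun l2 _ => Finset.sum_le_sum
      fun j1 _ => Finset.sum_le_sum fun j2 _ => hone l1 l2 j1 j2).trans (le_of_eq ?_)
    have hin : ∀ (l1 : K1 × J1) (l2 : K2 × J2), (∑ j1, ∑ j2,
        (1 / γ - if j1 = l1.2 then (if j2 = l2.2 then 1 / γ else 0) else 0))
        = (Fintype.card J1 * Fintype.card J2 - 1) / γ := by
      intro l1 l2
      simp only [Finset.sum_sub_distrib]
      simp
      ring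
    simp only [hin, Finset.sum_const, Finset.card_univ, nsmul_eq_mul]
    ring
  have hP' : B / (Fintype.card (K1 × J1) * Fintype.card (K2 × J2)) *
      ∑ a1, ∑ a2, (∑ l1 : K1 × J1, ∑ l2 : K2 × J2, ∑ j1, ∑ j2,
        if j1 = l1.2 ∧ j2 = l2.2 then 0 else p a1 a2 * pk a1 a2 l1 l2 j1 j2)
      ≤ B * ((Fintype.card J1 * Fintype.card J2 - 1) / γ) := by
    refine (mul_le_mul_of_nonneg_left hP (by positivity)).trans (le_of_eq ?_)
    field_simp
  -- the covering errors of the two encoders, averaged over the sources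
  have hD1 : ∑ a1, ∑ a2, p a1 a2 * δ1 a1 = √(τ1 / (Fintype.card K1 * Fintype.card J1))
      + 2 * jointMean p w1 w2 (fun a1 _ u1 _ => if w1 a1 u1 / q1 u1 > τ1 then 1 else 0) := by
    have e : ∀ a1 a2, p a1 a2 * δ1 a1 = p a1 a2 * √(τ1 / (Fintype.card K1 * Fintype.card J1))
        + 2 * ∑ u1, ∑ u2, p a1 a2 * w1 a1 u1 * w2 a2 u2 *
          (if w1 a1 u1 / q1 u1 > τ1 then 1 else 0) := by
      intro a1 a2
      by_cases h : p a1 a2 = 0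
      · simp [h]
      · simp only [hδ1, hr1 a1 a2 h, Fintype.card_prod, Nat.cast_mul, mul_add]
        have : ∀ u1, ∑ u2, p a1 a2 * w1 a1 u1 * w2 a2 u2 *
            (if w1 a1 u1 / q1 u1 > τ1 then 1 else 0)
            = p a1 a2 * (w1 a1 u1 * (if w1 a1 u1 / q1 u1 > τ1 then 1 else 0)) := by
          intro u1
          rw [← Finset.sum_mul, ← Finset.mul_sum, hw2]; ring
        simp only [this, ← Finset.mul_sum]
        ring
    have hpull : ∀ X : ℝ, ∑ a1, ∑ a2, p a1 a2 * X = X := fun X => by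
      simp only [← Finset.sum_mul, hp1, one_mul]
    simp only [e, Finset.sum_add_distrib, hpull]
    simp only [jointMean, Finset.mul_sum]
  have hD2 : ∑ a1, ∑ a2, p a1 a2 * δ2 a2 = √(τ2 / (Fintype.card K2 * Fintype.card J2))
      + 2 * jointMean p w1 w2 (fun _ a2 _ u2 => if w2 a2 u2 / q2 u2 > τ2 then 1 else 0) := by
    have e : ∀ a1 a2, p a1 a2 * δ2 a2 = p a1 a2 * √(τ2 / (Fintype.card K2 * Fintype.card J2))
        + 2 * ∑ u1, ∑ u2, p a1 a2 * w1 a1 u1 * w2 a2 u2 *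
          (if w2 a2 u2 / q2 u2 > τ2 then 1 else 0) := by
      intro a1 a2
      by_cases h : p a1 a2 = 0
      · simp [h]
      · simp only [hδ2, hr2 a1 a2 h, Fintype.card_prod, Nat.cast_mul, mul_add]
        rw [Finset.sum_comm]
        have : ∀ u2, ∑ u1, p a1 a2 * w1 a1 u1 * w2 a2 u2 *
            (if w2 a2 u2 / q2 u2 > τ2 then 1 else 0)
            = p a1 a2 * (w2 a2 u2 * (if w2 a2 u2 / q2 u2 > τ2 then 1 else 0)) := by
          intro u2
          rw [← Finset.sum_mul, ← Finset.sum_mul, ← Finset.mul_sum, hw1]; ring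
        simp only [this, ← Finset.mul_sum]
        ring
    have hpull : ∀ X : ℝ, ∑ a1, ∑ a2, p a1 a2 * X = X := fun X => by
      simp only [← Finset.sum_mul, hp1, one_mul]
    simp only [e, Finset.sum_add_distrib, hpull]
    simp only [jointMean, Finset.mul_sum]
  have hfin := add_le_add (add_le_add hA.le hP')
    (le_of_eq (congrArg (B * ·) (congrArg₂ (· + ·) hD1 hD2)))
  refine le_trans (le_of_eq ?_) (hfin.trans (le_of_eq ?_))
  · simp only [Finset.mul_sum]
  · simp only [htd]; ring

end OneShot

/-! ### Memoryless extensions and information quantities -/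

section Product
variable {X1 X2 U1 U2 : Type*} [Fintype X1] [Fintype X2] [Fintype U1] [Fintype U2]

lemma sum_sum_prod {ι A B : Type*} [Fintype ι] [DecidableEq ι] [Fintype A] [Fintype B]
    (f : ι → A → B → ℝ) :
    ∑ x : ι → A, ∑ y : ι → B, ∏ t, f t (x t) (y t) = ∏ t, ∑ a, ∑ b, f t a b := by
  classical
  rw [Finset.prod_univ_sum, Fintype.piFinset_univ]
  refine Finset.sum_congr rfl fun x _ => ?_
  rw [Finset.prod_univ_sum, Fintype.piFinset_univ]

lemma sum_prod_apply {ι B : Type*} [Fintype ι] [DecidableEq ι] [Fintype B] (f : ι → B → ℝ) :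
    ∑ y : ι → B, ∏ t, f t (y t) = ∏ t, ∑ b, f t b := by
  classical
  rw [Finset.prod_univ_sum, Fintype.piFinset_univ]

/-- The single-letter joint law as a weight on quadruples. -/
noncomputable def jointLaw (p : X1 → X2 → ℝ) (W1 : X1 → U1 → ℝ) (W2 : X2 → U2 → ℝ)
    (z : X1 × X2 × U1 × U2) : ℝ := p z.1 z.2.1 * W1 z.1 z.2.2.1 * W2 z.2.1 z.2.2.2

lemma jointMean_eq_sum (p : X1 → X2 → ℝ) (W1 : X1 → U1 → ℝ) (W2 : X2 → U2 → ℝ)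
    (F : X1 → X2 → U1 → U2 → ℝ) :
    jointMean p W1 W2 F = ∑ z, jointLaw p W1 W2 z * F z.1 z.2.1 z.2.2.1 z.2.2.2 := by
  simp only [jointMean, jointLaw, Fintype.sum_prod_type]

/-- The joint law of the memoryless extension is the i.i.d. law of quadruples. -/
lemma jointMean_pi {n : ℕ} (p : X1 → X2 → ℝ) (W1 : X1 → U1 → ℝ) (W2 : X2 → U2 → ℝ)
    (F : (Fin n → X1) → (Fin n → X2) → (Fin n → U1) → (Fin n → U2) → ℝ) :
    jointMean (fun x1 x2 => ∏ t, p (x1 t) (x2 t)) (fun x u => ∏ t, W1 (x t) (u t))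
      (fun x u => ∏ t, W2 (x t) (u t)) F
      = ∑ c : Fin n → X1 × X2 × U1 × U2, iidLaw (jointLaw p W1 W2) c *
        F (fun t => (c t).1) (fun t => (c t).2.1) (fun t => (c t).2.2.1)
          (fun t => (c t).2.2.2) := by
  rw [jointMean_eq_sum]
  let e : ((Fin n → X1) × (Fin n → X2) × (Fin n → U1) × (Fin n → U2)) ≃
      (Fin n → X1 × X2 × U1 × U2) :=
    { toFun := fun x t => (x.1 t, x.2.1 t, x.2.2.1 t, x.2.2.2 t)
      invFun := fun c => (fun t => (c t).1, fun t => (c t).2.1, fun t => (c t).2.2.1,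
        fun t => (c t).2.2.2)
      left_inv := fun _ => rfl
      right_inv := fun _ => rfl }
  refine Fintype.sum_equiv e _ _ fun x => ?_
  simp only [jointLaw, iidLaw, e, Equiv.coe_fn_mk, Finset.prod_mul_distrib]

end Product

/-- One-sided asymptotic equipartition bound: under the i.i.d. law of `P`, the product of the
ratios `f` exceeds `2 ^ (n (I + ε))`, with `I` the mean of `log₂ f`, with vanishing probability.
The function `χ` stands for the indicator of an event inside this one. -/
lemma aep {α : Type*} [Fintype α] (P : α → ℝ) (hP : ∀ a, 0 ≤ P a) (hP1 : ∑ a, P a = 1)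
    (f : α → ℝ) (hf : ∀ a, P a ≠ 0 → 0 < f a) {ε : ℝ} (hε : 0 < ε) {n : ℕ} (hn : 0 < n)
    (χ : (Fin n → α) → ℝ) (hχ1 : ∀ c, χ c ≤ 1)
    (hχ : ∀ c, iidLaw P c ≠ 0 → χ c ≤ 0 ∨
      (2:ℝ) ^ ((n:ℝ) * ((∑ a, P a * Real.logb 2 (f a)) + ε)) ≤ ∏ t, f (c t)) :
    ∑ c, iidLaw P c * χ c ≤ √((∑ a, P a * Real.logb 2 (f a) ^ 2) / n) / ε := by
  set I := ∑ a, P a * Real.logb 2 (f a) with hI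
  have : Nonempty (Fin n) := ⟨⟨0, hn⟩⟩
  have hn' : (0:ℝ) < n := by exact_mod_cast hn
  have hdev := iid_abs_dev_le (ι := Fin n) P hP hP1 (fun a => Real.logb 2 (f a))
  rw [Fintype.card_fin, ← hI] at hdev
  rw [le_div_iff₀ hε]
  refine le_trans ?_ hdev
  rw [Finset.sum_mul]
  refine Finset.sum_le_sum fun c _ => ?_
  by_cases h0 : iidLaw P c = 0
  · simp [h0]
  rw [mul_assoc]
  refine mul_le_mul_of_nonneg_left ?_ (iidLaw_nonneg P hP c)
  rcases hχ c h0 with h | h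
  · exact le_trans (by nlinarith) (abs_nonneg _)
  · have hpos : ∀ t, 0 < f (c t) := fun t =>
      hf _ (Finset.prod_ne_zero_iff.mp h0 t (Finset.mem_univ t))
    have hlog := Real.logb_le_logb_of_le (b := 2) (by norm_num) (by positivity) h
    rw [Real.logb_rpow (by norm_num) (by norm_num), Real.logb_prod _ (fun t => f (c t))
      (fun t _ => (hpos t).ne')]
      at hlog
    have h1 : ε ≤ (∑ t, Real.logb 2 (f (c t))) / n - I := by
      rw [le_sub_iff_add_le, le_div_iff₀ hn']; linarith
    have h2 := le_abs_self ((∑ t, Real.logb 2 (f (c t))) / (n:ℝ) - I)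
    nlinarith [hχ1 c]

section Information
variable {X1 X2 U1 U2 : Type*} [Fintype X1] [Fintype X2] [Fintype U1] [Fintype U2]
  (p : X1 → X2 → ℝ) (W1 : X1 → U1 → ℝ) (W2 : X2 → U2 → ℝ)

/-- The marginal of `U₁`. -/
noncomputable def marg1 (u : U1) : ℝ := ∑ a1, ∑ a2, p a1 a2 * W1 a1 u

/-- The marginal of `U₂`. -/
noncomputable def marg2 (u : U2) : ℝ := ∑ a1, ∑ a2, p a1 a2 * W2 a2 u

/-- The joint marginal of `(U₁, U₂)`. -/
noncomputable def marg12 (u1 : U1) (u2 : U2) : ℝ := ∑ a1, ∑ a2, p a1 a2 * W1 a1 u1 * W2 a2 u2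

/-- `I(X₁;U₁)`, as the mean of the information density `log₂ (W₁(u₁|x₁) / P(u₁))`. -/
noncomputable def info1 : ℝ :=
  jointMean p W1 W2 fun x1 _ u1 _ => Real.logb 2 (W1 x1 u1 / marg1 p W1 u1)

/-- `I(X₂;U₂)`. -/
noncomputable def info2 : ℝ :=
  jointMean p W1 W2 fun _ x2 _ u2 => Real.logb 2 (W2 x2 u2 / marg2 p W2 u2)

/-- `-I(U₁;U₂)`, as the mean of `log₂ (P(u₁) P(u₂) / P(u₁,u₂))`. -/
noncomputable def negInfo12 : ℝ :=
  jointMean p W1 W2 fun _ _ u1 u2 =>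
    Real.logb 2 (marg1 p W1 u1 * marg2 p W2 u2 / marg12 p W1 W2 u1 u2)

lemma sum_sum_pos {A B : Type*} [Fintype A] [Fintype B] {f : A → B → ℝ} (hf : ∀ a b, 0 ≤ f a b)
    {a : A} {b : B} (h : 0 < f a b) : 0 < ∑ a, ∑ b, f a b :=
  Finset.sum_pos' (fun a _ => Finset.sum_nonneg fun b _ => hf a b) ⟨a, Finset.mem_univ a,
    Finset.sum_pos' (fun b _ => hf a b) ⟨b, Finset.mem_univ b, h⟩⟩

variable {p W1 W2}

omit [Fintype U1] [Fintype U2] in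
lemma factors_pos (hp0 : ∀ x1 x2, 0 ≤ p x1 x2) (hW10 : ∀ x u, 0 ≤ W1 x u)
    (hW20 : ∀ x u, 0 ≤ W2 x u) {x1 : X1} {x2 : X2} {u1 : U1} {u2 : U2}
    (h : p x1 x2 * W1 x1 u1 * W2 x2 u2 ≠ 0) :
    0 < p x1 x2 ∧ 0 < W1 x1 u1 ∧ 0 < W2 x2 u2 ∧ 0 < marg1 p W1 u1 ∧ 0 < marg2 p W2 u2 ∧
      0 < marg12 p W1 W2 u1 u2 := by
  have h1 : 0 < p x1 x2 := lt_of_le_of_ne (hp0 _ _) fun e => h (by rw [← e]; ring)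
  have h2 : 0 < W1 x1 u1 := lt_of_le_of_ne (hW10 _ _) fun e => h (by rw [← e]; ring)
  have h3 : 0 < W2 x2 u2 := lt_of_le_of_ne (hW20 _ _) fun e => h (by rw [← e]; ring)
  refine ⟨h1, h2, h3, ?_, ?_, ?_⟩
  · exact sum_sum_pos (f := fun a1 a2 => p a1 a2 * W1 a1 u1)
      (fun _ _ => mul_nonneg (hp0 _ _) (hW10 _ _)) (mul_pos h1 h2)
  · exact sum_sum_pos (f := fun a1 a2 => p a1 a2 * W2 a2 u2)
      (fun _ _ => mul_nonneg (hp0 _ _) (hW20 _ _)) (mul_pos h1 h3)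
  · exact sum_sum_pos (f := fun a1 a2 => p a1 a2 * W1 a1 u1 * W2 a2 u2)
      (fun _ _ => mul_nonneg (mul_nonneg (hp0 _ _) (hW10 _ _)) (hW20 _ _))
      (mul_pos (mul_pos h1 h2) h3)

lemma jointMean_add (F G : X1 → X2 → U1 → U2 → ℝ) :
    jointMean p W1 W2 F + jointMean p W1 W2 G
      = jointMean p W1 W2 (fun x1 x2 u1 u2 => F x1 x2 u1 u2 + G x1 x2 u1 u2) := by
  simp only [jointMean, mul_add, Finset.sum_add_distrib]

lemma jointMean_congr {F G : X1 → X2 → U1 → U2 → ℝ}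
    (h : ∀ x1 x2 u1 u2, p x1 x2 * W1 x1 u1 * W2 x2 u2 ≠ 0 → F x1 x2 u1 u2 = G x1 x2 u1 u2) :
    jointMean p W1 W2 F = jointMean p W1 W2 G := by
  unfold jointMean
  refine Finset.sum_congr rfl fun x1 _ => Finset.sum_congr rfl fun x2 _ =>
    Finset.sum_congr rfl fun u1 _ => Finset.sum_congr rfl fun u2 _ => ?_
  by_cases h0 : p x1 x2 * W1 x1 u1 * W2 x2 u2 = 0
  · rw [h0, zero_mul, zero_mul]
  · rw [h _ _ _ _ h0]

/-- `I(X₁;U₁|U₂) = I(X₁;U₁) - I(U₁;U₂)`, by the Markov chain `U₁ - X₁ - X₂ - U₂`. -/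
lemma condInfo1_eq (hp0 : ∀ x1 x2, 0 ≤ p x1 x2) (hW10 : ∀ x u, 0 ≤ W1 x u)
    (hW11 : ∀ x, ∑ u, W1 x u = 1) (hW20 : ∀ x u, 0 ≤ W2 x u) :
    ∑ x1, ∑ u1, ∑ u2,
      (∑ x2, p x1 x2 * W1 x1 u1 * W2 x2 u2) *
      Real.logb 2 (((∑ x2, p x1 x2 * W1 x1 u1 * W2 x2 u2) *
          (∑ x1', ∑ x2', ∑ u1', p x1' x2' * W1 x1' u1' * W2 x2' u2)) /
        ((∑ x2', ∑ u1', p x1 x2' * W1 x1 u1' * W2 x2' u2) *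
          (∑ x1', ∑ x2', p x1' x2' * W1 x1' u1 * W2 x2' u2)))
    = info1 p W1 W2 + negInfo12 p W1 W2 := by
  have e1 : ∀ x1 x2 u2, ∑ u1', p x1 x2 * W1 x1 u1' * W2 x2 u2 = p x1 x2 * W2 x2 u2 :=
    fun x1 x2 u2 => by rw [← Finset.sum_mul, ← Finset.mul_sum, hW11, mul_one]
  have e2 : ∀ x1 u1 u2, ∑ x2, p x1 x2 * W1 x1 u1 * W2 x2 u2
      = W1 x1 u1 * ∑ x2, p x1 x2 * W2 x2 u2 := fun x1 u1 u2 => by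
    rw [Finset.mul_sum]; exact Finset.sum_congr rfl fun _ _ => by ring
  rw [info1, negInfo12, jointMean_add]
  calc _ = jointMean p W1 W2 (fun x1 _ u1 u2 =>
        Real.logb 2 ((W1 x1 u1 * (∑ x2, p x1 x2 * W2 x2 u2) * marg2 p W2 u2) /
          ((∑ x2, p x1 x2 * W2 x2 u2) * marg12 p W1 W2 u1 u2))) := by
        simp only [jointMean, e1]
        refine Finset.sum_congr rfl fun x1 _ => ?_
        rw [Finset.sum_comm]
        symm
        rw [Finset.sum_comm]
        rw [Finset.sum_comm (s := (Finset.univ : Finset U2))]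
        refine Finset.sum_congr rfl fun u1 _ => ?_
        rw [Finset.sum_comm]
        refine Finset.sum_congr rfl fun u2 _ => ?_
        rw [← Finset.sum_mul, e2]
        rfl
    _ = _ := by
        refine jointMean_congr fun x1 x2 u1 u2 h => ?_
        obtain ⟨h1, h2, h3, h4, h5, h6⟩ := factors_pos hp0 hW10 hW20 h
        have hs : 0 < ∑ x2, p x1 x2 * W2 x2 u2 :=
          Finset.sum_pos' (fun _ _ => mul_nonneg (hp0 _ _) (hW20 _ _))
            ⟨x2, Finset.mem_univ _, mul_pos h1 h3⟩
        rw [← Real.logb_mul (by positivity) (by positivity)]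
        congr 1
        field_simp

/-- `I(X₂;U₂|U₁) = I(X₂;U₂) - I(U₁;U₂)`. -/
lemma condInfo2_eq (hp0 : ∀ x1 x2, 0 ≤ p x1 x2) (hW10 : ∀ x u, 0 ≤ W1 x u)
    (hW20 : ∀ x u, 0 ≤ W2 x u) (hW21 : ∀ x, ∑ u, W2 x u = 1) :
    ∑ x2, ∑ u2, ∑ u1,
      (∑ x1, p x1 x2 * W1 x1 u1 * W2 x2 u2) *
      Real.logb 2 (((∑ x1, p x1 x2 * W1 x1 u1 * W2 x2 u2) *
          (∑ x1', ∑ x2', ∑ u2', p x1' x2' * W1 x1' u1 * W2 x2' u2')) /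
        ((∑ x1', ∑ u2', p x1' x2 * W1 x1' u1 * W2 x2 u2') *
          (∑ x1', ∑ x2', p x1' x2' * W1 x1' u1 * W2 x2' u2)))
    = info2 p W1 W2 + negInfo12 p W1 W2 := by
  have e1 : ∀ x1 x2 u1, ∑ u2', p x1 x2 * W1 x1 u1 * W2 x2 u2' = p x1 x2 * W1 x1 u1 :=
    fun x1 x2 u1 => by rw [← Finset.mul_sum, hW21, mul_one]
  have e2 : ∀ x2 u1 u2, ∑ x1, p x1 x2 * W1 x1 u1 * W2 x2 u2
      = W2 x2 u2 * ∑ x1, p x1 x2 * W1 x1 u1 := fun x1 u1 u2 => by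
    rw [Finset.mul_sum]; exact Finset.sum_congr rfl fun _ _ => by ring
  rw [info2, negInfo12, jointMean_add]
  calc _ = jointMean p W1 W2 (fun _ x2 u1 u2 =>
        Real.logb 2 ((W2 x2 u2 * (∑ x1, p x1 x2 * W1 x1 u1) * marg1 p W1 u1) /
          ((∑ x1, p x1 x2 * W1 x1 u1) * marg12 p W1 W2 u1 u2))) := by
        simp only [jointMean, e1]
        symm
        rw [Finset.sum_comm]
        refine Finset.sum_congr rfl fun x2 _ => ?_
        rw [Finset.sum_comm]
        symm
        rw [Finset.sum_comm]
        refine Finset.sum_congr rfl fun u1 _ => ?_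
        symm
        rw [Finset.sum_comm]
        refine Finset.sum_congr rfl fun u2 _ => ?_
        rw [← Finset.sum_mul, e2]
        rfl
    _ = _ := by
        refine jointMean_congr fun x1 x2 u1 u2 h => ?_
        obtain ⟨h1, h2, h3, h4, h5, h6⟩ := factors_pos hp0 hW10 hW20 h
        have hs : 0 < ∑ x1, p x1 x2 * W1 x1 u1 :=
          Finset.sum_pos' (fun _ _ => mul_nonneg (hp0 _ _) (hW10 _ _))
            ⟨x1, Finset.mem_univ _, mul_pos h1 h2⟩
        rw [← Real.logb_mul (by positivity) (by positivity)]
        congr 1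
        field_simp

/-- `I(X₁,X₂;U₁,U₂) = I(X₁;U₁) + I(X₂;U₂) - I(U₁;U₂)`. -/
lemma jointInfo_eq (hp0 : ∀ x1 x2, 0 ≤ p x1 x2) (hW10 : ∀ x u, 0 ≤ W1 x u)
    (hW20 : ∀ x u, 0 ≤ W2 x u) :
    ∑ x1, ∑ x2, ∑ u1, ∑ u2,
      p x1 x2 * W1 x1 u1 * W2 x2 u2 *
      Real.logb 2 ((p x1 x2 * W1 x1 u1 * W2 x2 u2) /
        (p x1 x2 * (∑ x1', ∑ x2', p x1' x2' * W1 x1' u1 * W2 x2' u2)))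
    = info1 p W1 W2 + info2 p W1 W2 + negInfo12 p W1 W2 := by
  rw [info1, info2, negInfo12, jointMean_add, jointMean_add]
  change jointMean p W1 W2 (fun x1 x2 u1 u2 => Real.logb 2 ((p x1 x2 * W1 x1 u1 * W2 x2 u2) /
        (p x1 x2 * marg12 p W1 W2 u1 u2))) = _
  refine jointMean_congr fun x1 x2 u1 u2 h => ?_
  obtain ⟨h1, h2, h3, h4, h5, h6⟩ := factors_pos hp0 hW10 hW20 h
  rw [← Real.logb_mul (by positivity) (by positivity),
    ← Real.logb_mul (by positivity) (by positivity)]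
  congr 1
  field_simp

end Information

/-! ### The bound for block length `n` -/

section NFold
variable {X1 X2 U1 U2 : Type*} [Fintype X1] [Fintype X2] [Fintype U1] [Fintype U2]
  {p : X1 → X2 → ℝ} {W1 : X1 → U1 → ℝ} {W2 : X2 → U2 → ℝ}

omit [Fintype X1] [Fintype X2] [Fintype U1] [Fintype U2] in
lemma jointLaw_nonneg (hp0 : ∀ x1 x2, 0 ≤ p x1 x2) (hW10 : ∀ x u, 0 ≤ W1 x u)
    (hW20 : ∀ x u, 0 ≤ W2 x u) (z : X1 × X2 × U1 × U2) : 0 ≤ jointLaw p W1 W2 z :=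
  mul_nonneg (mul_nonneg (hp0 _ _) (hW10 _ _)) (hW20 _ _)

lemma sum_jointLaw (hp1 : ∑ x1, ∑ x2, p x1 x2 = 1) (hW11 : ∀ x, ∑ u, W1 x u = 1)
    (hW21 : ∀ x, ∑ u, W2 x u = 1) : ∑ z, jointLaw p W1 W2 z = 1 := by
  simp only [jointLaw, Fintype.sum_prod_type, ← Finset.mul_sum, hW21, mul_one, hW11, hp1]

/-- `aep` for the memoryless extension of the joint law. -/
lemma aep_jointMean (hp0 : ∀ x1 x2, 0 ≤ p x1 x2) (hp1 : ∑ x1, ∑ x2, p x1 x2 = 1)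
    (hW10 : ∀ x u, 0 ≤ W1 x u) (hW11 : ∀ x, ∑ u, W1 x u = 1)
    (hW20 : ∀ x u, 0 ≤ W2 x u) (hW21 : ∀ x, ∑ u, W2 x u = 1)
    (f : X1 → X2 → U1 → U2 → ℝ)
    (hf : ∀ x1 x2 u1 u2, p x1 x2 * W1 x1 u1 * W2 x2 u2 ≠ 0 → 0 < f x1 x2 u1 u2)
    {ε : ℝ} (hε : 0 < ε) {n : ℕ} (hn : 0 < n)
    (χ : (Fin n → X1) → (Fin n → X2) → (Fin n → U1) → (Fin n → U2) → ℝ)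
    (hχ1 : ∀ x1 x2 u1 u2, χ x1 x2 u1 u2 ≤ 1)
    (hχ : ∀ x1 x2 u1 u2, (∀ t, p (x1 t) (x2 t) * W1 (x1 t) (u1 t) * W2 (x2 t) (u2 t) ≠ 0) →
      χ x1 x2 u1 u2 ≤ 0 ∨
      (2:ℝ) ^ ((n:ℝ) * (jointMean p W1 W2 (fun x1 x2 u1 u2 => Real.logb 2 (f x1 x2 u1 u2)) + ε))
        ≤ ∏ t, f (x1 t) (x2 t) (u1 t) (u2 t)) :
    jointMean (fun x1 x2 => ∏ t, p (x1 t) (x2 t)) (fun x u => ∏ t, W1 (x t) (u t))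
      (fun x u => ∏ t, W2 (x t) (u t)) χ
      ≤ √(jointMean p W1 W2 (fun x1 x2 u1 u2 => Real.logb 2 (f x1 x2 u1 u2) ^ 2) / n) / ε := by
  rw [jointMean_pi, jointMean_eq_sum]
  rw [jointMean_eq_sum] at hχ
  refine aep (jointLaw p W1 W2) (jointLaw_nonneg hp0 hW10 hW20) (sum_jointLaw hp1 hW11 hW21)
    (fun z => f z.1 z.2.1 z.2.2.1 z.2.2.2) (fun z hz => hf _ _ _ _ hz) hε hn _
    (fun c => hχ1 _ _ _ _) fun c hc => ?_
  exact hχ _ _ _ _ fun t => Finset.prod_ne_zero_iff.mp hc t (Finset.mem_univ t)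

/-- Under the memoryless extension, an empirical average rarely exceeds by much a level that
is at least the single-letter mean. -/
lemma excess_jointMean (hp0 : ∀ x1 x2, 0 ≤ p x1 x2) (hp1 : ∑ x1, ∑ x2, p x1 x2 = 1)
    (hW10 : ∀ x u, 0 ≤ W1 x u) (hW11 : ∀ x, ∑ u, W1 x u = 1)
    (hW20 : ∀ x u, 0 ≤ W2 x u) (hW21 : ∀ x, ∑ u, W2 x u = 1)
    (f : X1 → X2 → U1 → U2 → ℝ) {D : ℝ} (hD : jointMean p W1 W2 f ≤ D) {n : ℕ} (hn : 0 < n) :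
    jointMean (fun x1 x2 => ∏ t, p (x1 t) (x2 t)) (fun x u => ∏ t, W1 (x t) (u t))
      (fun x u => ∏ t, W2 (x t) (u t))
      (fun (x1 : Fin n → X1) (x2 : Fin n → X2) (u1 : Fin n → U1) (u2 : Fin n → U2) =>
        max 0 ((n:ℝ)⁻¹ * (∑ t, f (x1 t) (x2 t) (u1 t) (u2 t)) - D))
      ≤ √(jointMean p W1 W2 (fun x1 x2 u1 u2 => f x1 x2 u1 u2 ^ 2) / n) := by
  have : Nonempty (Fin n) := ⟨⟨0, hn⟩⟩
  rw [jointMean_pi, jointMean_eq_sum]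
  rw [jointMean_eq_sum] at hD
  have h := iid_abs_dev_le (ι := Fin n) (jointLaw p W1 W2) (jointLaw_nonneg hp0 hW10 hW20)
    (sum_jointLaw hp1 hW11 hW21) (fun z => f z.1 z.2.1 z.2.2.1 z.2.2.2)
  rw [Fintype.card_fin] at h
  refine le_trans (Finset.sum_le_sum fun c _ => ?_) h
  refine mul_le_mul_of_nonneg_left (max_le (abs_nonneg _) ?_)
    (iidLaw_nonneg _ (jointLaw_nonneg hp0 hW10 hW20) c)
  refine le_trans ?_ (le_abs_self _)
  rw [inv_mul_eq_div]
  linarith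

/-- The sum of all single-letter distortions bounds the loss uniformly in `n`. -/
lemma excess_le_sum {A C : Type*} [Fintype A] [Fintype C] {n : ℕ} (hn : 0 < n)
    (d : A → C → ℝ) (hd : ∀ x y, 0 ≤ d x y) {D : ℝ} (hD : 0 ≤ D) (x : Fin n → A)
    (y : Fin n → C) :
    max 0 ((n:ℝ)⁻¹ * (∑ t, d (x t) (y t)) - D) ≤ ∑ x, ∑ y, d x y := by
  have hn' : (0:ℝ) < n := by exact_mod_cast hn
  have hS : 0 ≤ ∑ x, ∑ y, d x y := Finset.sum_nonneg fun _ _ => Finset.sum_nonneg fun _ _ =>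
    hd _ _
  refine max_le hS ?_
  have h1 : ∑ t, d (x t) (y t) ≤ ∑ _t : Fin n, ∑ x, ∑ y, d x y :=
    Finset.sum_le_sum fun t _ =>
      le_trans (Finset.single_le_sum (f := fun y => d (x t) y) (fun _ _ => hd _ _)
        (Finset.mem_univ (y t)))
        (Finset.single_le_sum (f := fun x => ∑ y, d x y)
          (fun _ _ => Finset.sum_nonneg fun _ _ => hd _ _) (Finset.mem_univ (x t)))
  rw [Finset.sum_const, Finset.card_univ, Fintype.card_fin, nsmul_eq_mul] at h1
  rw [inv_mul_eq_div]
  have h2 : (∑ t, d (x t) (y t)) / n ≤ ∑ x, ∑ y, d x y := by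
    rw [div_le_iff₀ hn']; linarith
  linarith

/-- The one-shot bound for the memoryless extension, with message sets of sizes `M₁`, `M₂` and
`N₁`, `N₂` codewords per message. The loss is the sum of the excesses of the two average
distortions over their levels. -/
lemma n_shot {Y1 Y2 : Type*} [Fintype Y1] [Fintype Y2]
    (hp0 : ∀ x1 x2, 0 ≤ p x1 x2) (hp1 : ∑ x1, ∑ x2, p x1 x2 = 1)
    (hW10 : ∀ x u, 0 ≤ W1 x u) (hW11 : ∀ x, ∑ u, W1 x u = 1)
    (hW20 : ∀ x u, 0 ≤ W2 x u) (hW21 : ∀ x, ∑ u, W2 x u = 1)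
    (d1 : X1 → Y1 → ℝ) (hd1 : ∀ x y, 0 ≤ d1 x y) (d2 : X2 → Y2 → ℝ) (hd2 : ∀ x y, 0 ≤ d2 x y)
    (φ1 : U1 → U2 → Y1) (φ2 : U1 → U2 → Y2) {D1 D2 : ℝ}
    (hD1 : jointMean p W1 W2 (fun x1 _ u1 u2 => d1 x1 (φ1 u1 u2)) ≤ D1)
    (hD2 : jointMean p W1 W2 (fun _ x2 u1 u2 => d2 x2 (φ2 u1 u2)) ≤ D2)
    {ε : ℝ} (hε : 0 < ε) {n : ℕ} (hn : 0 < n) {M1 M2 N1 N2 : ℕ}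
    (hM1 : 0 < M1) (hM2 : 0 < M2) (hN1 : 0 < N1) (hN2 : 0 < N2) :
    ∃ (e1 : (Fin n → X1) → Fin M1 → ℝ) (e2 : (Fin n → X2) → Fin M2 → ℝ)
      (g : Fin M1 → Fin M2 → (Fin n → Y1) × (Fin n → Y2)),
      (∀ a, (∀ k, 0 ≤ e1 a k) ∧ ∑ k, e1 a k = 1) ∧
      (∀ a, (∀ k, 0 ≤ e2 a k) ∧ ∑ k, e2 a k = 1) ∧
      ∑ x1 : Fin n → X1, ∑ x2 : Fin n → X2, (∏ t, p (x1 t) (x2 t)) *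
          ∑ k1, ∑ k2, e1 x1 k1 * e2 x2 k2 *
            (max 0 ((n:ℝ)⁻¹ * (∑ t, d1 (x1 t) ((g k1 k2).1 t)) - D1)
              + max 0 ((n:ℝ)⁻¹ * (∑ t, d2 (x2 t) ((g k1 k2).2 t)) - D2))
        ≤ √(jointMean p W1 W2 (fun x1 _ u1 u2 => d1 x1 (φ1 u1 u2) ^ 2) / n)
          + √(jointMean p W1 W2 (fun _ x2 u1 u2 => d2 x2 (φ2 u1 u2) ^ 2) / n)
          + ((∑ x, ∑ y, d1 x y) + ∑ x, ∑ y, d2 x y) *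
            (√((2:ℝ) ^ ((n:ℝ) * (info1 p W1 W2 + ε)) / (M1 * N1))
              + 2 * (√(jointMean p W1 W2 (fun x1 _ u1 _ =>
                  Real.logb 2 (W1 x1 u1 / marg1 p W1 u1) ^ 2) / n) / ε)
              + √((2:ℝ) ^ ((n:ℝ) * (info2 p W1 W2 + ε)) / (M2 * N2))
              + 2 * (√(jointMean p W1 W2 (fun _ x2 _ u2 =>
                  Real.logb 2 (W2 x2 u2 / marg2 p W2 u2) ^ 2) / n) / ε)
              + √(jointMean p W1 W2 (fun _ _ u1 u2 =>
                  Real.logb 2 (marg1 p W1 u1 * marg2 p W2 u2 / marg12 p W1 W2 u1 u2) ^ 2) / n) / ε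
              + (N1 * N2 - 1) / (2:ℝ) ^ ((n:ℝ) * (-negInfo12 p W1 W2 - ε))) := by
  classical
  have : Nonempty (Fin M1) := ⟨⟨0, hM1⟩⟩
  have : Nonempty (Fin M2) := ⟨⟨0, hM2⟩⟩
  have : Nonempty (Fin N1) := ⟨⟨0, hN1⟩⟩
  have : Nonempty (Fin N2) := ⟨⟨0, hN2⟩⟩
  have hn' : (0:ℝ) < n := by exact_mod_cast hn
  have hD10 : 0 ≤ D1 := le_trans (Finset.sum_nonneg fun _ _ => Finset.sum_nonneg fun _ _ =>
    Finset.sum_nonneg fun _ _ => Finset.sum_nonneg fun _ _ =>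
      mul_nonneg (mul_nonneg (mul_nonneg (hp0 _ _) (hW10 _ _)) (hW20 _ _)) (hd1 _ _)) hD1
  have hD20 : 0 ≤ D2 := le_trans (Finset.sum_nonneg fun _ _ => Finset.sum_nonneg fun _ _ =>
    Finset.sum_nonneg fun _ _ => Finset.sum_nonneg fun _ _ =>
      mul_nonneg (mul_nonneg (mul_nonneg (hp0 _ _) (hW10 _ _)) (hW20 _ _)) (hd2 _ _)) hD2
  have hS1 : 0 ≤ ∑ x, ∑ y, d1 x y := Finset.sum_nonneg fun _ _ => Finset.sum_nonneg fun _ _ =>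
    hd1 _ _
  have hS2 : 0 ≤ ∑ x, ∑ y, d2 x y := Finset.sum_nonneg fun _ _ => Finset.sum_nonneg fun _ _ =>
    hd2 _ _
  obtain ⟨e1, e2, g, he1, he2, hle⟩ := one_shot (K1 := Fin M1) (K2 := Fin M2) (J1 := Fin N1)
    (J2 := Fin N2) (fun (x1 : Fin n → X1) (x2 : Fin n → X2) => ∏ t, p (x1 t) (x2 t))
    (fun x (u : Fin n → U1) => ∏ t, W1 (x t) (u t))
    (fun x (u : Fin n → U2) => ∏ t, W2 (x t) (u t))
    (fun _ _ => Finset.prod_nonneg fun _ _ => hp0 _ _)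
    (by rw [sum_sum_prod (fun _ => p)]; simp [hp1])
    (fun _ _ => Finset.prod_nonneg fun _ _ => hW10 _ _)
    (fun x => by rw [sum_prod_apply (fun t => W1 (x t))]; simp [hW11])
    (fun _ _ => Finset.prod_nonneg fun _ _ => hW20 _ _)
    (fun x => by rw [sum_prod_apply (fun t => W2 (x t))]; simp [hW21])
    (fun u => ∏ t, marg1 p W1 (u t)) (fun u => ∏ t, marg2 p W2 (u t))
    (fun u1 u2 => ∏ t, marg12 p W1 W2 (u1 t) (u2 t))
    (fun u => by
      simp only [marg1, ← Finset.prod_mul_distrib]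
      rw [sum_sum_prod (fun t a1 a2 => p a1 a2 * W1 a1 (u t))])
    (fun u => by
      simp only [marg2, ← Finset.prod_mul_distrib]
      rw [sum_sum_prod (fun t a1 a2 => p a1 a2 * W2 a2 (u t))])
    (fun u1 u2 => by
      simp only [marg12, ← Finset.prod_mul_distrib]
      rw [sum_sum_prod (fun t a1 a2 => p a1 a2 * W1 a1 (u1 t) * W2 a2 (u2 t))])
    (fun u1 u2 => ((fun t => φ1 (u1 t) (u2 t), fun t => φ2 (u1 t) (u2 t)) :
      (Fin n → Y1) × (Fin n → Y2)))
    (fun x1 x2 y => max 0 ((n:ℝ)⁻¹ * (∑ t, d1 (x1 t) (y.1 t)) - D1)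
              + max 0 ((n:ℝ)⁻¹ * (∑ t, d2 (x2 t) (y.2 t)) - D2))
    (B := (∑ x, ∑ y, d1 x y) + ∑ x, ∑ y, d2 x y) (add_nonneg hS1 hS2)
    (fun _ _ _ => add_nonneg (le_max_left _ _) (le_max_left _ _))
    (fun x1 x2 y => add_le_add (excess_le_sum hn d1 hd1 hD10 x1 y.1) 
      (excess_le_sum hn d2 hd2 hD20 x2 y.2))
    (τ1 := (2:ℝ) ^ ((n:ℝ) * (info1 p W1 W2 + ε))) (τ2 := (2:ℝ) ^ ((n:ℝ) * (info2 p W1 W2 + ε)))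
    (γ := (2:ℝ) ^ ((n:ℝ) * (-negInfo12 p W1 W2 - ε)))
    (by positivity) (by positivity) (by positivity)
  refine ⟨e1, e2, g, he1, he2, hle.trans ?_⟩
  simp only [Fintype.card_fin]
  refine add_le_add ?_ (mul_le_mul_of_nonneg_left ?_ (add_nonneg hS1 hS2))
  · rw [← jointMean_add]
    exact add_le_add
      (excess_jointMean hp0 hp1 hW10 hW11 hW20 hW21 (fun x1 _ u1 u2 => d1 x1 (φ1 u1 u2)) hD1 hn)
      (excess_jointMean hp0 hp1 hW10 hW11 hW20 hW21 (fun _ x2 u1 u2 => d2 x2 (φ2 u1 u2)) hD2 hn)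
  -- the information densities deviate from their means with vanishing probability
  · have t1 := aep_jointMean hp0 hp1 hW10 hW11 hW20 hW21
      (fun x1 _ u1 _ => W1 x1 u1 / marg1 p W1 u1)
      (fun x1 x2 u1 u2 h => by
        obtain ⟨h1, h2, h3, h4, h5, h6⟩ := factors_pos hp0 hW10 hW20 h
        positivity) hε hn
      (fun x1 _ u1 _ => if (∏ t, W1 (x1 t) (u1 t)) / (∏ t, marg1 p W1 (u1 t))
        > (2:ℝ) ^ ((n:ℝ) * (info1 p W1 W2 + ε)) then 1 else 0)
      (fun _ _ _ _ => by split_ifs <;> norm_num)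
      (fun x1 x2 u1 u2 _ => by
        split_ifs with h
        · right; rw [Finset.prod_div_distrib]; exact h.le
        · left; exact le_rfl)
    have t2 := aep_jointMean hp0 hp1 hW10 hW11 hW20 hW21
      (fun _ x2 _ u2 => W2 x2 u2 / marg2 p W2 u2)
      (fun x1 x2 u1 u2 h => by
        obtain ⟨h1, h2, h3, h4, h5, h6⟩ := factors_pos hp0 hW10 hW20 h
        positivity) hε hn
      (fun _ x2 _ u2 => if (∏ t, W2 (x2 t) (u2 t)) / (∏ t, marg2 p W2 (u2 t))
        > (2:ℝ) ^ ((n:ℝ) * (info2 p W1 W2 + ε)) then 1 else 0)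
      (fun _ _ _ _ => by split_ifs <;> norm_num)
      (fun x1 x2 u1 u2 _ => by
        split_ifs with h
        · right; rw [Finset.prod_div_distrib]; exact h.le
        · left; exact le_rfl)
    have t3 := aep_jointMean hp0 hp1 hW10 hW11 hW20 hW21
      (fun _ _ u1 u2 => marg1 p W1 u1 * marg2 p W2 u2 / marg12 p W1 W2 u1 u2)
      (fun x1 x2 u1 u2 h => by
        obtain ⟨h1, h2, h3, h4, h5, h6⟩ := factors_pos hp0 hW10 hW20 h
        positivity) hε hn
      (fun _ _ u1 u2 => 1 - if (∏ t, marg12 p W1 W2 (u1 t) (u2 t)) >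
        (2:ℝ) ^ ((n:ℝ) * (-negInfo12 p W1 W2 - ε)) *
          ((∏ t, marg1 p W1 (u1 t)) * ∏ t, marg2 p W2 (u2 t)) then 1 else 0)
      (fun _ _ _ _ => by split_ifs <;> norm_num)
      (fun x1 x2 u1 u2 hs => by
        split_ifs with h
        · left; norm_num
        · right
          have h12 : 0 < ∏ t, marg12 p W1 W2 (u1 t) (u2 t) :=
            Finset.prod_pos fun t _ => (factors_pos hp0 hW10 hW20 (hs t)).2.2.2.2.2
          rw [Finset.prod_div_distrib, Finset.prod_mul_distrib, le_div_iff₀ h12]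
          have hg : (2:ℝ) ^ ((n:ℝ) * (negInfo12 p W1 W2 + ε)) *
              (2:ℝ) ^ ((n:ℝ) * (-negInfo12 p W1 W2 - ε)) = 1 := by
            rw [← Real.rpow_add (by norm_num)]
            ring_nf
            simp
          have h2 := mul_le_mul_of_nonneg_left (not_lt.mp h)
            (by positivity : (0:ℝ) ≤ (2:ℝ) ^ ((n:ℝ) * (negInfo12 p W1 W2 + ε)))
          rwa [← mul_assoc, hg, one_mul] at h2)
    gcongr

end NFold

/-! ### Rates and limits -/

section Rates

/-- Enough codewords for soft covering: `M N` codewords exceed the threshold `2 ^ (n (I + ε))` by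
a factor `2 ^ (n ε)`. -/
lemma cover_rate (n : ℕ) (I R ε : ℝ) :
    √((2:ℝ) ^ ((n:ℝ) * (I + ε)) / ((⌈(2:ℝ) ^ ((n:ℝ) * R)⌉₊ : ℝ) *
      (⌈(2:ℝ) ^ ((n:ℝ) * max 0 (I - R + 2 * ε))⌉₊ : ℝ))) ≤ √((2:ℝ) ^ (-((n:ℝ) * ε))) := by
  apply Real.sqrt_le_sqrt
  set S := max 0 (I - R + 2 * ε)
  have hS : I - R + 2 * ε ≤ S := le_max_right _ _
  have hM := Nat.le_ceil ((2:ℝ) ^ ((n:ℝ) * R))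
  have hN := Nat.le_ceil ((2:ℝ) ^ ((n:ℝ) * S))
  have hR0 : (0:ℝ) < (2:ℝ) ^ ((n:ℝ) * R) := by positivity
  have hS0 : (0:ℝ) < (2:ℝ) ^ ((n:ℝ) * S) := by positivity
  rw [div_le_iff₀ (mul_pos (hR0.trans_le hM) (hS0.trans_le hN))]
  calc (2:ℝ) ^ ((n:ℝ) * (I + ε))
      ≤ (2:ℝ) ^ (-((n:ℝ) * ε)) * ((2:ℝ) ^ ((n:ℝ) * R) * (2:ℝ) ^ ((n:ℝ) * S)) := by
        rw [← Real.rpow_add (by norm_num), ← Real.rpow_add (by norm_num)]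
        apply Real.rpow_le_rpow_of_exponent_le (by norm_num)
        have hn : (0:ℝ) ≤ n := Nat.cast_nonneg n
        nlinarith
    _ ≤ _ := by gcongr

lemma ceil_le_two_mul {x : ℝ} (hx : 1 ≤ x) : (⌈x⌉₊ : ℝ) ≤ 2 * x := by
  have := Nat.ceil_lt_add_one (zero_le_one.trans hx)
  linarith

/-- Few enough codewords per bin for the joint decoder. If both bins are singletons, there is no
wrong codeword, whatever the sign of `K`. -/
lemma pack_rate (n : ℕ) {a1 a2 K ε : ℝ} (h1 : a1 ≤ K) (h2 : a2 ≤ K) (h12 : a1 + a2 ≤ K) :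
    ((⌈(2:ℝ) ^ ((n:ℝ) * max 0 a1)⌉₊ : ℝ) * (⌈(2:ℝ) ^ ((n:ℝ) * max 0 a2)⌉₊ : ℝ) - 1) /
      (2:ℝ) ^ ((n:ℝ) * (K + ε)) ≤ 4 * (2:ℝ) ^ (-((n:ℝ) * ε)) := by
  have hn : (0:ℝ) ≤ n := Nat.cast_nonneg n
  rw [div_le_iff₀ (by positivity), mul_assoc, ← Real.rpow_add (by norm_num)]
  by_cases h : a1 ≤ 0 ∧ a2 ≤ 0
  · rw [max_eq_left h.1, max_eq_left h.2]
    simp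
    positivity
  have hK : max 0 a1 + max 0 a2 ≤ K := by
    rcases max_cases 0 a1 with ⟨e1, _⟩ | ⟨e1, _⟩ <;> rcases max_cases 0 a2 with ⟨e2, _⟩ | ⟨e2, _⟩
    · exact absurd ⟨by assumption, by assumption⟩ h
    all_goals linarith
  have b1 := ceil_le_two_mul (Real.one_le_rpow (x := 2) (by norm_num)
    (mul_nonneg hn (le_max_left 0 a1)))
  have b2 := ceil_le_two_mul (Real.one_le_rpow (x := 2) (by norm_num)
    (mul_nonneg hn (le_max_left 0 a2)))
  calc _ ≤ (⌈(2:ℝ) ^ ((n:ℝ) * max 0 a1)⌉₊ : ℝ) * (⌈(2:ℝ) ^ ((n:ℝ) * max 0 a2)⌉₊ : ℝ) := by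
        linarith
    _ ≤ (2 * (2:ℝ) ^ ((n:ℝ) * max 0 a1)) * (2 * (2:ℝ) ^ ((n:ℝ) * max 0 a2)) := by gcongr
    _ = 4 * (2:ℝ) ^ ((n:ℝ) * (max 0 a1 + max 0 a2)) := by
        rw [mul_add, Real.rpow_add (by norm_num)]; ring
    _ ≤ _ := by
        refine mul_le_mul_of_nonneg_left
          (Real.rpow_le_rpow_of_exponent_le (by norm_num) ?_) (by norm_num)
        nlinarith

lemma tendsto_sqrt_div (V : ℝ) : Tendsto (fun n : ℕ => √(V / n)) atTop (nhds 0) := by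
  have := (tendsto_const_div_atTop_nhds_zero_nat V).sqrt
  simpa using this

lemma tendsto_two_rpow_neg {ε : ℝ} (hε : 0 < ε) :
    Tendsto (fun n : ℕ => (2:ℝ) ^ (-((n:ℝ) * ε))) atTop (nhds 0) := by
  have h : ∀ n : ℕ, (2:ℝ) ^ (-((n:ℝ) * ε)) = ((2:ℝ) ^ (-ε)) ^ n := fun n => by
    rw [← Real.rpow_natCast, ← Real.rpow_mul (by norm_num)]
    congr 1; ring
  simp only [h]
  exact tendsto_pow_atTop_nhds_zero_of_lt_one (by positivity)
    (Real.rpow_lt_one_of_one_lt_of_neg (by norm_num) (by linarith))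

/-- Good codes of every block length: the mean total excess distortion of the code of length `n`
is at most `η n`, and `η` vanishes. -/
lemma exists_codes {X1 X2 U1 U2 Y1 Y2 : Type*}
    [Fintype X1] [Fintype X2] [Fintype U1] [Fintype U2] [Fintype Y1] [Fintype Y2]
    [Nonempty Y1] [Nonempty Y2]
    {p : X1 → X2 → ℝ} {W1 : X1 → U1 → ℝ} {W2 : X2 → U2 → ℝ}
    (hp0 : ∀ x1 x2, 0 ≤ p x1 x2) (hp1 : ∑ x1, ∑ x2, p x1 x2 = 1)
    (hW10 : ∀ x u, 0 ≤ W1 x u) (hW11 : ∀ x, ∑ u, W1 x u = 1)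
    (hW20 : ∀ x u, 0 ≤ W2 x u) (hW21 : ∀ x, ∑ u, W2 x u = 1)
    (d1 : X1 → Y1 → ℝ) (hd1 : ∀ x y, 0 ≤ d1 x y) (d2 : X2 → Y2 → ℝ) (hd2 : ∀ x y, 0 ≤ d2 x y)
    (φ1 : U1 → U2 → Y1) (φ2 : U1 → U2 → Y2) {R1 R2 D1 D2 : ℝ}
    (hD1 : jointMean p W1 W2 (fun x1 _ u1 u2 => d1 x1 (φ1 u1 u2)) ≤ D1)
    (hD2 : jointMean p W1 W2 (fun _ x2 u1 u2 => d2 x2 (φ2 u1 u2)) ≤ D2)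
    (hR1 : info1 p W1 W2 + negInfo12 p W1 W2 < R1)
    (hR2 : info2 p W1 W2 + negInfo12 p W1 W2 < R2)
    (hR12 : info1 p W1 W2 + info2 p W1 W2 + negInfo12 p W1 W2 < R1 + R2) :
    ∃ η : ℕ → ℝ, Tendsto η atTop (nhds 0) ∧ ∀ n : ℕ,
    ∃ (e1 : (Fin n → X1) → Fin ⌈(2:ℝ) ^ ((n:ℝ) * R1)⌉₊ → ℝ)
      (e2 : (Fin n → X2) → Fin ⌈(2:ℝ) ^ ((n:ℝ) * R2)⌉₊ → ℝ)
      (g : Fin ⌈(2:ℝ) ^ ((n:ℝ) * R1)⌉₊ → Fin ⌈(2:ℝ) ^ ((n:ℝ) * R2)⌉₊ →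
        (Fin n → Y1) × (Fin n → Y2)),
      (∀ a, (∀ k, 0 ≤ e1 a k) ∧ ∑ k, e1 a k = 1) ∧
      (∀ a, (∀ k, 0 ≤ e2 a k) ∧ ∑ k, e2 a k = 1) ∧
      (0 < n → ∑ x1 : Fin n → X1, ∑ x2 : Fin n → X2, (∏ t, p (x1 t) (x2 t)) *
          ∑ k1, ∑ k2, e1 x1 k1 * e2 x2 k2 *
            (max 0 ((n:ℝ)⁻¹ * (∑ t, d1 (x1 t) ((g k1 k2).1 t)) - D1)
              + max 0 ((n:ℝ)⁻¹ * (∑ t, d2 (x2 t) ((g k1 k2).2 t)) - D2)) ≤ η n) := by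
  set I1 := info1 p W1 W2
  set I2 := info2 p W1 W2
  set G := negInfo12 p W1 W2
  -- slack in the three rate constraints: each bin index has rate `max 0 (I_k - R_k + 2 ε)`, while
  -- the threshold of the joint test has exponent `-G - ε`
  obtain ⟨ε, hε, hε1, hε2, hε12⟩ : ∃ ε : ℝ, 0 < ε ∧ 4 * ε ≤ R1 - (I1 + G) ∧
      4 * ε ≤ R2 - (I2 + G) ∧ 6 * ε ≤ R1 + R2 - (I1 + I2 + G) := by
    refine ⟨min (min ((R1 - (I1 + G)) / 4) ((R2 - (I2 + G)) / 4))
      ((R1 + R2 - (I1 + I2 + G)) / 6), ?_, ?_, ?_, ?_⟩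
    · refine lt_min (lt_min ?_ ?_) ?_ <;> linarith
    · have : min (min ((R1 - (I1 + G)) / 4) ((R2 - (I2 + G)) / 4))
          ((R1 + R2 - (I1 + I2 + G)) / 6) ≤ (R1 - (I1 + G)) / 4 :=
        (min_le_left _ _).trans (min_le_left _ _)
      linarith
    · have : min (min ((R1 - (I1 + G)) / 4) ((R2 - (I2 + G)) / 4))
          ((R1 + R2 - (I1 + I2 + G)) / 6) ≤ (R2 - (I2 + G)) / 4 :=
        (min_le_left _ _).trans (min_le_right _ _)
      linarith
    · have : min (min ((R1 - (I1 + G)) / 4) ((R2 - (I2 + G)) / 4))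
          ((R1 + R2 - (I1 + I2 + G)) / 6) ≤ (R1 + R2 - (I1 + I2 + G)) / 6 := min_le_right _ _
      linarith
  have hpos : ∀ x : ℝ, 0 < ⌈(2:ℝ) ^ x⌉₊ := fun x => Nat.ceil_pos.mpr (by positivity)
  set V1 := jointMean p W1 W2 (fun x1 _ u1 u2 => d1 x1 (φ1 u1 u2) ^ 2)
  set V2 := jointMean p W1 W2 (fun _ x2 u1 u2 => d2 x2 (φ2 u1 u2) ^ 2)
  set V3 := jointMean p W1 W2 (fun x1 _ u1 _ => Real.logb 2 (W1 x1 u1 / marg1 p W1 u1) ^ 2)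
  set V4 := jointMean p W1 W2 (fun _ x2 _ u2 => Real.logb 2 (W2 x2 u2 / marg2 p W2 u2) ^ 2)
  set V5 := jointMean p W1 W2 (fun _ _ u1 u2 =>
    Real.logb 2 (marg1 p W1 u1 * marg2 p W2 u2 / marg12 p W1 W2 u1 u2) ^ 2)
  set B := (∑ x, ∑ y, d1 x y) + ∑ x, ∑ y, d2 x y
  have hB : 0 ≤ B := add_nonneg
    (Finset.sum_nonneg fun _ _ => Finset.sum_nonneg fun _ _ => hd1 _ _)
    (Finset.sum_nonneg fun _ _ => Finset.sum_nonneg fun _ _ => hd2 _ _)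
  refine ⟨fun n => √(V1 / n) + √(V2 / n) + B * (√((2:ℝ) ^ (-((n:ℝ) * ε))) + 2 * (√(V3 / n) / ε)
    + √((2:ℝ) ^ (-((n:ℝ) * ε))) + 2 * (√(V4 / n) / ε) + √(V5 / n) / ε
    + 4 * (2:ℝ) ^ (-((n:ℝ) * ε))), ?_, fun n => ?_⟩
  · have hr := tendsto_two_rpow_neg hε
    have hsr := hr.sqrt
    have hV := fun V => (tendsto_sqrt_div V).div_const ε
    have := ((tendsto_sqrt_div V1).add (tendsto_sqrt_div V2)).add
      ((((((hsr.add ((hV V3).const_mul 2)).add hsr).add ((hV V4).const_mul 2)).add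
        (hV V5)).add (hr.const_mul 4)).const_mul B)
    simpa using this
  rcases Nat.eq_zero_or_pos n with hn | hn
  · refine ⟨fun _ k => if k = ⟨0, hpos _⟩ then 1 else 0,
      fun _ k => if k = ⟨0, hpos _⟩ then 1 else 0,
      fun _ _ => Classical.arbitrary _, fun _ => ⟨fun k => by positivity, by simp⟩,
      fun _ => ⟨fun k => by positivity, by simp⟩, fun h => absurd h (by omega)⟩
  · obtain ⟨e1, e2, g, he1, he2, hle⟩ := n_shot hp0 hp1 hW10 hW11 hW20 hW21 d1 hd1 d2 hd2 φ1 φ2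
      hD1 hD2 hε hn (hpos ((n:ℝ) * R1)) (hpos ((n:ℝ) * R2))
      (hpos ((n:ℝ) * max 0 (I1 - R1 + 2 * ε))) (hpos ((n:ℝ) * max 0 (I2 - R2 + 2 * ε)))
    refine ⟨e1, e2, g, he1, he2, fun _ => hle.trans ?_⟩
    have c1 := cover_rate n I1 R1 ε
    have c2 := cover_rate n I2 R2 ε
    have c3 := pack_rate n (a1 := I1 - R1 + 2 * ε) (a2 := I2 - R2 + 2 * ε) (K := -G - 2 * ε)
      (ε := ε) (by linarith) (by linarith) (by linarith)
    have hK : -G - 2 * ε + ε = -G - ε := by ring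
    rw [hK] at c3
    exact add_le_add le_rfl (mul_le_mul_of_nonneg_left (by linarith only [c1, c2, c3]) hB)

/-- The passage from the mean excess over `D` to the upper limit of the mean distortion, for one
of the two sources; `x` ranges over source pairs. -/
lemma limsup_le_of_excess {X K Y : ℕ → Type*} [∀ n, Fintype (X n)] [∀ n, Fintype (K n)]
    [∀ n, Fintype (Y n)] [∀ n, DecidableEq (Y n)]
    (P : ∀ n, X n → ℝ) (hP : ∀ n x, 0 ≤ P n x) (hP1 : ∀ n, ∑ x, P n x = 1)
    (e : ∀ n, X n → K n → ℝ) (he : ∀ n x k, 0 ≤ e n x k) (he1 : ∀ n x, ∑ k, e n x k = 1)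
    (g : ∀ n, K n → Y n) (δ : ∀ n, X n → Y n → ℝ) (hδ : ∀ n x y, 0 ≤ δ n x y) {D : ℝ}
    {η : ℕ → ℝ} (hη : Tendsto η atTop (nhds 0))
    (h : ∀ n, 0 < n → ∑ x, P n x * ∑ k, e n x k * max 0 (δ n x (g n k) - D) ≤ η n) :
    limsup (fun n => ∑ x, ∑ y, P n x * (∑ k, e n x k * if y = g n k then 1 else 0) * δ n x y)
      atTop ≤ D := by
  have hcol : ∀ n, ∑ x, ∑ y, P n x * (∑ k, e n x k * if y = g n k then 1 else 0) * δ n x y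
      = ∑ x, P n x * ∑ k, e n x k * δ n x (g n k) := by
    intro n
    refine Finset.sum_congr rfl fun x _ => ?_
    simp only [mul_assoc, ← Finset.mul_sum]
    congr 1
    simp only [Finset.sum_mul]
    rw [Finset.sum_comm]
    refine Finset.sum_congr rfl fun k _ => ?_
    simp
  simp only [hcol]
  have hlim : Tendsto (fun n => D + η n) atTop (nhds D) := by simpa using hη.const_add D
  rw [← hlim.limsup_eq]
  refine limsup_le_limsup ?_ ?_ hlim.isBoundedUnder_le
  · filter_upwards [eventually_gt_atTop 0] with n hn
    calc _ ≤ ∑ x, P n x * ∑ k, e n x k * (D + max 0 (δ n x (g n k) - D)) := by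
          refine Finset.sum_le_sum fun x _ => mul_le_mul_of_nonneg_left
            (Finset.sum_le_sum fun k _ => mul_le_mul_of_nonneg_left ?_ (he n x k)) (hP n x)
          linarith [le_max_right 0 (δ n x (g n k) - D)]
      _ = D + ∑ x, P n x * ∑ k, e n x k * max 0 (δ n x (g n k) - D) := by
          simp only [mul_add, Finset.sum_add_distrib, ← Finset.sum_mul, he1, hP1, one_mul]
      _ ≤ D + η n := by linarith [h n hn]
  · refine IsCoboundedUnder.of_frequently_ge (a := 0) (Frequently.of_forall fun n => ?_)
    exact Finset.sum_nonneg fun x _ => mul_nonneg (hP n x)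
      (Finset.sum_nonneg fun k _ => mul_nonneg (he n x k) (hδ _ _ _))

end Rates

/-- Berger–Tung inner bound: for i.i.d. correlated sources `(X₁^n,X₂^n) ~ ∏ P_{X₁X₂}`,
conditional pmfs `P̄_{U₁|X₁} = W₁`, `P̄_{U₂|X₂} = W₂` (so `U₁ − X₁ − X₂ − U₂`), and
reconstruction functions `φ₁, φ₂` with `E_{P̄}[d_k(X_k, φ_k(U₁,U₂))] ≤ D_k`, if
`R₁ > I(X₁;U₁|U₂)`, `R₂ > I(X₂;U₂|U₁)` and `R₁+R₂ > I(X₁,X₂;U₁,U₂)`, then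
`(R₁,R₂)` is achievable under distortion level `(D₁,D₂)` with separate stochastic
encoders and a joint stochastic decoder. -/
theorem stmt13 {X1 X2 U1 U2 Y1 Y2 : Type}
    [Fintype X1] [Fintype X2] [Fintype U1] [Fintype U2] [Fintype Y1] [Fintype Y2]
    [Nonempty X1] [Nonempty X2] [Nonempty U1] [Nonempty U2] [Nonempty Y1] [Nonempty Y2]
    (p12 : X1 → X2 → ℝ) (hp0 : ∀ x1 x2, 0 ≤ p12 x1 x2) (hp1 : ∑ x1, ∑ x2, p12 x1 x2 = 1)
    (W1 : X1 → U1 → ℝ) (hW10 : ∀ x u, 0 ≤ W1 x u) (hW11 : ∀ x, ∑ u, W1 x u = 1)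
    (W2 : X2 → U2 → ℝ) (hW20 : ∀ x u, 0 ≤ W2 x u) (hW21 : ∀ x, ∑ u, W2 x u = 1)
    (d1 : X1 → Y1 → ℝ) (hd1 : ∀ x y, 0 ≤ d1 x y)
    (d2 : X2 → Y2 → ℝ) (hd2 : ∀ x y, 0 ≤ d2 x y)
    (φ1 : U1 → U2 → Y1) (φ2 : U1 → U2 → Y2)
    (R1 R2 D1 D2 : ℝ)
    (hD1 : (∑ x1, ∑ x2, ∑ u1, ∑ u2,
      p12 x1 x2 * W1 x1 u1 * W2 x2 u2 * d1 x1 (φ1 u1 u2)) ≤ D1)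
    (hD2 : (∑ x1, ∑ x2, ∑ u1, ∑ u2,
      p12 x1 x2 * W1 x1 u1 * W2 x2 u2 * d2 x2 (φ2 u1 u2)) ≤ D2)
    (hR1 : R1 > ∑ x1, ∑ u1, ∑ u2,
      (∑ x2, p12 x1 x2 * W1 x1 u1 * W2 x2 u2) *
      Real.logb 2 (((∑ x2, p12 x1 x2 * W1 x1 u1 * W2 x2 u2) *
          (∑ x1', ∑ x2', ∑ u1', p12 x1' x2' * W1 x1' u1' * W2 x2' u2)) /
        ((∑ x2', ∑ u1', p12 x1 x2' * W1 x1 u1' * W2 x2' u2) *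
          (∑ x1', ∑ x2', p12 x1' x2' * W1 x1' u1 * W2 x2' u2))))
    (hR2 : R2 > ∑ x2, ∑ u2, ∑ u1,
      (∑ x1, p12 x1 x2 * W1 x1 u1 * W2 x2 u2) *
      Real.logb 2 (((∑ x1, p12 x1 x2 * W1 x1 u1 * W2 x2 u2) *
          (∑ x1', ∑ x2', ∑ u2', p12 x1' x2' * W1 x1' u1 * W2 x2' u2')) /
        ((∑ x1', ∑ u2', p12 x1' x2 * W1 x1' u1 * W2 x2 u2') *
          (∑ x1', ∑ x2', p12 x1' x2' * W1 x1' u1 * W2 x2' u2))))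
    (hR12 : R1 + R2 > ∑ x1, ∑ x2, ∑ u1, ∑ u2,
      p12 x1 x2 * W1 x1 u1 * W2 x2 u2 *
      Real.logb 2 ((p12 x1 x2 * W1 x1 u1 * W2 x2 u2) /
        (p12 x1 x2 * (∑ x1', ∑ x2', p12 x1' x2' * W1 x1' u1 * W2 x2' u2)))) :
    ∃ (enc1 : (n : ℕ) → (Fin n → X1) → Fin (Nat.ceil ((2:ℝ) ^ ((n:ℝ) * R1))) → ℝ)
      (enc2 : (n : ℕ) → (Fin n → X2) → Fin (Nat.ceil ((2:ℝ) ^ ((n:ℝ) * R2))) → ℝ)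
      (dec : (n : ℕ) → Fin (Nat.ceil ((2:ℝ) ^ ((n:ℝ) * R1))) →
        Fin (Nat.ceil ((2:ℝ) ^ ((n:ℝ) * R2))) → ((Fin n → Y1) × (Fin n → Y2)) → ℝ),
      (∀ n xs1, (∀ m1, 0 ≤ enc1 n xs1 m1) ∧ ∑ m1, enc1 n xs1 m1 = 1) ∧
      (∀ n xs2, (∀ m2, 0 ≤ enc2 n xs2 m2) ∧ ∑ m2, enc2 n xs2 m2 = 1) ∧
      (∀ n m1 m2, (∀ ys, 0 ≤ dec n m1 m2 ys) ∧ ∑ ys, dec n m1 m2 ys = 1) ∧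
      Filter.limsup (fun n : ℕ =>
        ∑ xs1 : Fin n → X1, ∑ xs2 : Fin n → X2,
        ∑ ys : (Fin n → Y1) × (Fin n → Y2),
          (∏ t, p12 (xs1 t) (xs2 t)) *
            (∑ m1, ∑ m2, enc1 n xs1 m1 * enc2 n xs2 m2 * dec n m1 m2 ys) *
          ((n : ℝ)⁻¹ * ∑ t, d1 (xs1 t) (ys.1 t))) atTop ≤ D1 ∧
      Filter.limsup (fun n : ℕ =>
        ∑ xs1 : Fin n → X1, ∑ xs2 : Fin n → X2,
        ∑ ys : (Fin n → Y1) × (Fin n → Y2),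
          (∏ t, p12 (xs1 t) (xs2 t)) *
            (∑ m1, ∑ m2, enc1 n xs1 m1 * enc2 n xs2 m2 * dec n m1 m2 ys) *
          ((n : ℝ)⁻¹ * ∑ t, d2 (xs2 t) (ys.2 t))) atTop ≤ D2 := by
  classical
  rw [gt_iff_lt, condInfo1_eq hp0 hW10 hW11 hW20] at hR1
  rw [gt_iff_lt, condInfo2_eq hp0 hW10 hW20 hW21] at hR2
  rw [gt_iff_lt, jointInfo_eq hp0 hW10 hW20] at hR12
  obtain ⟨η, hη, hcodes⟩ := exists_codes hp0 hp1 hW10 hW11 hW20 hW21 d1 hd1 d2 hd2 φ1 φ2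
    hD1 hD2 hR1 hR2 hR12
  choose e1 e2 g he1 he2 hle using hcodes
  have hP : ∀ (n : ℕ) (x : (Fin n → X1) × (Fin n → X2)), 0 ≤ ∏ t, p12 (x.1 t) (x.2 t) :=
    fun n x => Finset.prod_nonneg fun _ _ => hp0 _ _
  have hP1 : ∀ n : ℕ, ∑ x : (Fin n → X1) × (Fin n → X2), ∏ t, p12 (x.1 t) (x.2 t) = 1 :=
    fun n => by
      rw [Fintype.sum_prod_type, sum_sum_prod (fun _ => p12)]; simp [hp1]
  have he : ∀ (n : ℕ) (x : (Fin n → X1) × (Fin n → X2))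
      (k : Fin (Nat.ceil ((2:ℝ) ^ ((n:ℝ) * R1))) × Fin (Nat.ceil ((2:ℝ) ^ ((n:ℝ) * R2)))),
      0 ≤ e1 n x.1 k.1 * e2 n x.2 k.2 :=
    fun n x k => mul_nonneg ((he1 n x.1).1 k.1) ((he2 n x.2).1 k.2)
  have hes : ∀ (n : ℕ) (x : (Fin n → X1) × (Fin n → X2)),
      ∑ k : Fin (Nat.ceil ((2:ℝ) ^ ((n:ℝ) * R1))) × Fin (Nat.ceil ((2:ℝ) ^ ((n:ℝ) * R2))),
      e1 n x.1 k.1 * e2 n x.2 k.2 = 1 := fun n x => by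
    simp only [Fintype.sum_prod_type, ← Finset.mul_sum, (he1 n _).2, (he2 n _).2, mul_one]
  -- deterministic decoders suffice
  refine ⟨e1, e2, fun n m1 m2 ys => if ys = g n m1 m2 then 1 else 0, he1, he2,
    fun n m1 m2 => ⟨fun ys => by positivity, by simp⟩, ?_, ?_⟩
  · have := limsup_le_of_excess
      (fun n (x : (Fin n → X1) × (Fin n → X2)) => ∏ t, p12 (x.1 t) (x.2 t)) hP hP1
      (fun n x (k : Fin _ × Fin _) => e1 n x.1 k.1 * e2 n x.2 k.2) he hes
      (fun n k => g n k.1 k.2)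
      (fun n x y => (n : ℝ)⁻¹ * ∑ t, d1 (x.1 t) (y.1 t))
      (fun n x y => mul_nonneg (by positivity) (Finset.sum_nonneg fun _ _ => hd1 _ _))
      (D := D1) hη (fun n hn => le_trans (Finset.sum_le_sum fun x _ =>
        mul_le_mul_of_nonneg_left (Finset.sum_le_sum fun k _ =>
          mul_le_mul_of_nonneg_left (le_add_of_nonneg_right (le_max_left 0 ((n:ℝ)⁻¹ *
            (∑ t, d2 (x.2 t) ((g n k.1 k.2).2 t)) - D2))) (he n x k)) (hP n x))
        (by simpa only [Fintype.sum_prod_type] using hle n hn))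
    simp only [Fintype.sum_prod_type] at this ⊢
    exact this
  · have := limsup_le_of_excess
      (fun n (x : (Fin n → X1) × (Fin n → X2)) => ∏ t, p12 (x.1 t) (x.2 t)) hP hP1
      (fun n x (k : Fin _ × Fin _) => e1 n x.1 k.1 * e2 n x.2 k.2) he hes
      (fun n k => g n k.1 k.2)
      (fun n x y => (n : ℝ)⁻¹ * ∑ t, d2 (x.2 t) (y.2 t))
      (fun n x y => mul_nonneg (by positivity) (Finset.sum_nonneg fun _ _ => hd2 _ _))
      (D := D2) hη (fun n hn => le_trans (Finset.sum_le_sum fun x _ =>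
        mul_le_mul_of_nonneg_left (Finset.sum_le_sum fun k _ =>
          mul_le_mul_of_nonneg_left (le_add_of_nonneg_left (le_max_left 0 ((n:ℝ)⁻¹ *
            (∑ t, d1 (x.1 t) ((g n k.1 k.2).1 t)) - D1))) (he n x k)) (hP n x))
        (by simpa only [Fintype.sum_prod_type] using hle n hn))
    simp only [Fintype.sum_prod_type] at this ⊢
    exact this
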